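/- Let R be a Noetherian ring, S := R[X_1,…,X_n] a graded polynomial ring over R with deg X_i > 0 (and R in degree 0), N a finitely generated R-module, and M a finitely generated graded S-module. Set d := max{ i : H^i_{S_+}(M ⊗_R N) ≠ 0 }. Then the natural graded map H^d_{S_+}(M) ⊗_R N → H^d_{S_+}(M ⊗_R N) is an isomorphism, and for every i > d and every q one has Tor_q^R( H^i_{S_+}(M), N ) = 0 and H^i_{S_+}( Tor_q^R(M, N) ) = 0. -/

import Mathlib

noncomputable section CechCore

variable (A : Type) [CommRing A] {n : ℕ} (x : Fin n → A)
  (M : Type) [AddCommGroup M] [Module A M]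

/-- The localization of `M` at the powers of `∏ i ∈ S, x i`. -/
abbrev cechL (S : Finset (Fin n)) : Type :=
  LocalizedModule (Submonoid.powers (∏ i ∈ S, x i)) M

/-- The `p`-th term of the (stable Koszul/Čech) complex of `M` with respect to `x`. -/
abbrev cechC (p : ℕ) : Type := ∀ S : {S : Finset (Fin n) // S.card = p}, cechL A x M S.1

/-- The localization map between Čech localizations, for `S ⊆ T`. -/
def cechMap (S T : Finset (Fin n)) (h : S ⊆ T) : cechL A x M S →ₗ[A] cechL A x M T :=
  LocalizedModule.lift _ (LocalizedModule.mkLinearMap (Submonoid.powers (∏ i ∈ T, x i)) M)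
    (by
      rintro ⟨s, k, rfl⟩
      simp only [map_pow]
      refine IsUnit.pow k ?_
      have hu : IsUnit ((algebraMap A (Module.End A (cechL A x M T))) (∏ i ∈ T, x i)) :=
        IsLocalizedModule.map_units (LocalizedModule.mkLinearMap _ M)
          ⟨∏ i ∈ T, x i, Submonoid.mem_powers _⟩
      have h2 : (∏ i ∈ T, x i) = (∏ i ∈ T \ S, x i) * ∏ i ∈ S, x i :=
        (Finset.prod_sdiff h).symm
      have hu' : IsUnit ((algebraMap A (Module.End A (cechL A x M T)))
          ((∏ i ∈ T \ S, x i) * ∏ i ∈ S, x i)) := by rw [← h2]; exact hu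
      rw [map_mul] at hu'
      exact (((Commute.all ((∏ i ∈ T \ S, x i)) (∏ i ∈ S, x i)).map
        (algebraMap A (Module.End A (cechL A x M T))).toMonoidHom).isUnit_mul_iff.mp hu').2)

/-- The Čech differential. -/
def cechD (p : ℕ) : cechC A x M p →ₗ[A] cechC A x M (p + 1) :=
  LinearMap.pi fun T =>
    ∑ j ∈ T.1.attach,
      ((-1 : A) ^ (T.1.filter (fun a => a < j.1)).card) •
        ((cechMap A x M (T.1.erase j.1) T.1 (Finset.erase_subset _ _)).comp
          (LinearMap.proj (⟨T.1.erase j.1, by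
            simp [Finset.card_erase_of_mem j.2, T.2]⟩ : {S : Finset (Fin n) // S.card = p})))

/-- `c` is a coboundary in the Čech complex. -/
def cechIsBoundary : (p : ℕ) → cechC A x M p → Prop
  | 0, c => c = 0
  | (q + 1), c => ∃ b : cechC A x M q, cechD A x M q b = c

/-- The degree-`μ` graded piece of a Čech localization, for a grading `ℳ` of `M`
over a grading of `A` in which `x i` has degree `w i`. -/
def cechGrade (ℳ : ℤ → AddSubgroup M) (w : Fin n → ℤ) (μ : ℤ) (S : Finset (Fin n)) :
    AddSubgroup (cechL A x M S) :=
  AddSubgroup.closure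
    {c | ∃ (m : M) (k : ℕ), m ∈ ℳ (μ + k * (∑ i ∈ S, w i)) ∧
      c = LocalizedModule.mk m ⟨(∏ i ∈ S, x i) ^ k, Submonoid.pow_mem _ (Submonoid.mem_powers _) k⟩}

/-- `H^i_{(x)}(M)_μ ≠ 0`: there is a homogeneous degree-`μ` cocycle in the Čech complex
which is not a coboundary.  This is the nonvanishing of the degree-`μ` part of the `i`-th
local cohomology of the graded module `M` supported on the ideal generated by `x`. -/
def lcGradeNonzero (ℳ : ℤ → AddSubgroup M) (w : Fin n → ℤ) (i : ℕ) (μ : ℤ) : Prop :=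
  ∃ c : cechC A x M i, (∀ T, c T ∈ cechGrade A x M ℳ w μ T.1) ∧
    cechD A x M i c = 0 ∧ ¬ cechIsBoundary A x M i c

/-- `H^i_{(x)}(M) = 0` : every Čech cocycle is a coboundary. -/
def lcVanish (i : ℕ) : Prop :=
  ∀ c : cechC A x M i, cechD A x M i c = 0 → cechIsBoundary A x M i c

/-- The map from the previous term of the Čech complex (declared as the zero map in
homological degree `0`). -/
def cechDprev : (i : ℕ) → (cechC A x M (i - 1) →ₗ[A] cechC A x M i)
  | 0 => 0
  | (q + 1) => cechD A x M q

/-- The `i`-th local cohomology module of `M` supported on the ideal generated by `x`,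
defined as cocycles modulo (cocycles ∩ boundaries) of the Čech complex. -/
def lcMod (i : ℕ) : Type :=
  ↥(LinearMap.ker (cechD A x M i)) ⧸
    (Submodule.comap (LinearMap.ker (cechD A x M i)).subtype
      (LinearMap.range (cechDprev A x M i)))

instance (i : ℕ) : AddCommGroup (lcMod A x M i) := by unfold lcMod; infer_instance
instance (i : ℕ) : Module A (lcMod A x M i) := by unfold lcMod; infer_instance

/-- The ideal of elements of positive degree of a graded ring. -/
def irrelevantIdeal (𝒜 : ℤ → AddSubgroup A) : Ideal A :=
  Ideal.span {a : A | ∃ μ > 0, a ∈ 𝒜 μ}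

end CechCore

noncomputable section TmulCore

variable (R : Type) [CommRing R] (S : Type) [CommRing S] [Algebra R S]
variable (M : Type) [AddCommGroup M] [Module R M] [Module S M] [IsScalarTower R S M]
variable (N : Type) [AddCommGroup N] [Module R N]

/-- The `S`-linear map `m ↦ m ⊗ n`. -/
def tmulRightS (nn : N) : M →ₗ[S] TensorProduct R M N where
  toFun := fun m => m ⊗ₜ[R] nn
  map_add' := fun a b => TensorProduct.add_tmul a b nn
  map_smul' := fun s m => by simp [TensorProduct.smul_tmul']

/-- The canonical map `(M_f) ⊗_R N → (M ⊗_R N)_f` at the level of Čech localizations,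
sending `m/f^k ⊗ n` to `(m ⊗ n)/f^k`. -/
def cechTmul {n : ℕ} (x : Fin n → S) (T : Finset (Fin n))
    (c : cechL S x M T) (nn : N) : cechL S x (TensorProduct R M N) T :=
  LocalizedModule.lift _
    ((LocalizedModule.mkLinearMap (Submonoid.powers (∏ i ∈ T, x i))
        (TensorProduct R M N)).comp (tmulRightS R S M N nn))
    (fun s => IsLocalizedModule.map_units
      (LocalizedModule.mkLinearMap (Submonoid.powers (∏ i ∈ T, x i)) (TensorProduct R M N)) s) c

end TmulCore

noncomputable section TorCore

variable (R : Type) [CommRing R] (S : Type) [CommRing S] [Algebra R S]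
variable (M : Type) [AddCommGroup M] [Module R M] [Module S M] [IsScalarTower R S M]
variable (F : ℕ → Type) [∀ q, AddCommGroup (F q)] [∀ q, Module R (F q)]
variable (dF : ∀ q : ℕ, F (q + 1) →ₗ[R] F q)

/-- The differential `M ⊗ F_{q+1} → M ⊗ F_q` of the complex `M ⊗_R F_•`, as a map of
`S`-modules (through the `S`-module structure of `M`). -/
def torD (q : ℕ) : TensorProduct R M (F (q + 1)) →ₗ[S] TensorProduct R M (F q) :=
  TensorProduct.AlgebraTensorModule.map (LinearMap.id : M →ₗ[S] M) (dF q)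

/-- The outgoing differential `M ⊗ F_q → M ⊗ F_{q-1}` (the zero map for `q = 0`). -/
def torDout : (q : ℕ) → (TensorProduct R M (F q) →ₗ[S] TensorProduct R M (F (q - 1)))
  | 0 => 0
  | (q + 1) => torD R S M F dF q

/-- `Tor_q^R(M, N)` computed from a given free resolution `F_• → N` of `N`, as an
`S`-module: the homology `ker(M ⊗ F_q → M ⊗ F_{q-1}) / im(M ⊗ F_{q+1} → M ⊗ F_q)`. -/
def torMod (q : ℕ) : Type :=
  ↥(LinearMap.ker (torDout R S M F dF q)) ⧸
    (Submodule.comap (LinearMap.ker (torDout R S M F dF q)).subtype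
      (LinearMap.range (torD R S M F dF q)))

instance (q : ℕ) : AddCommGroup (torMod R S M F dF q) := by unfold torMod; infer_instance
instance (q : ℕ) : Module S (torMod R S M F dF q) := by unfold torMod; infer_instance

end TorCore

/-- `Tor_q^R(P, N)` for an `S`-module `P` (with `R`-action through `R → S`), computed
from the resolution `F_•` of `N`. -/
noncomputable def torModS (R : Type) [CommRing R] (S : Type) [CommRing S] [Algebra R S]
    (P : Type) [AddCommGroup P] [Module S P]
    (F : ℕ → Type) [∀ q, AddCommGroup (F q)] [∀ q, Module R (F q)]
    (dF : ∀ q : ℕ, F (q + 1) →ₗ[R] F q) (q : ℕ) : Type :=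
  letI : Module R P := Module.compHom P (algebraMap R S)
  letI : IsScalarTower R S P := ⟨fun r s m => by rw [Algebra.smul_def, mul_smul]; rfl⟩
  torMod R S P F dF q


namespace CB
noncomputable section

variable {A : Type} [CommRing A] {n : ℕ} (x : Fin n → A)
variable {L L' L'' : Type} [AddCommGroup L] [Module A L] [AddCommGroup L'] [Module A L']
  [AddCommGroup L''] [Module A L'']

/-- the element `(∏ i ∈ T, x i) ^ k` of the localizing submonoid -/
def pw (T : Finset (Fin n)) (k : ℕ) : Submonoid.powers (∏ i ∈ T, x i) :=
  ⟨(∏ i ∈ T, x i) ^ k, Submonoid.pow_mem _ (Submonoid.mem_powers _) k⟩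

@[simp] lemma pw_coe (T : Finset (Fin n)) (k : ℕ) : (pw x T k : A) = (∏ i ∈ T, x i) ^ k := rfl

lemma pw_smul (T : Finset (Fin n)) (k : ℕ) (m : L) :
    pw x T k • m = ((∏ i ∈ T, x i) ^ k) • m := rfl

lemma exists_mk (T : Finset (Fin n)) (c : cechL A x L T) :
    ∃ m k, c = LocalizedModule.mk m (pw x T k) := by
  induction c using LocalizedModule.induction_on with
  | h m s =>
    obtain ⟨s, k, rfl⟩ := s
    exact ⟨m, k, rfl⟩

lemma mk_eq_iff (T : Finset (Fin n)) (m m' : L) (k l : ℕ) :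
    (LocalizedModule.mk m (pw x T k) : cechL A x L T) = LocalizedModule.mk m' (pw x T l) ↔
      ∃ e : ℕ, (∏ i ∈ T, x i) ^ (e + l) • m = (∏ i ∈ T, x i) ^ (e + k) • m' := by
  rw [LocalizedModule.mk_eq]
  constructor
  · rintro ⟨⟨u, e, rfl⟩, h⟩
    refine ⟨e, ?_⟩
    rw [pow_add, pow_add, mul_smul, mul_smul]
    exact h
  · rintro ⟨e, h⟩
    refine ⟨pw x T e, ?_⟩
    rw [pow_add, pow_add, mul_smul, mul_smul] at h
    exact h


lemma smul_pw_mk (T : Finset (Fin n)) (k : ℕ) (m : L) :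
    (∏ i ∈ T, x i) ^ k • (LocalizedModule.mk m (pw x T k) : cechL A x L T) =
      LocalizedModule.mk m 1 := by
  rw [LocalizedModule.smul'_mk]
  exact LocalizedModule.mk_cancel (pw x T k) m

lemma cechMap_mk (S T : Finset (Fin n)) (h : S ⊆ T) (m : L) (k : ℕ) :
    cechMap A x L S T h (LocalizedModule.mk m (pw x S k)) =
      LocalizedModule.mk ((∏ i ∈ T \ S, x i) ^ k • m) (pw x T k) := by
  unfold cechMap
  rw [LocalizedModule.lift_mk, Module.End.algebraMap_isUnit_inv_apply_eq_iff]
  rw [pw_coe, ← LocalizedModule.smul'_mk, ← mul_smul, ← mul_pow, mul_comm,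
    Finset.prod_sdiff h, smul_pw_mk]
  rfl

/-- functoriality of the Cech localizations -/
def fL (φ : L →ₗ[A] L') (T : Finset (Fin n)) : cechL A x L T →ₗ[A] cechL A x L' T :=
  IsLocalizedModule.map (Submonoid.powers (∏ i ∈ T, x i))
    (LocalizedModule.mkLinearMap (Submonoid.powers (∏ i ∈ T, x i)) L)
    (LocalizedModule.mkLinearMap (Submonoid.powers (∏ i ∈ T, x i)) L') φ

lemma fL_mk (φ : L →ₗ[A] L') (T : Finset (Fin n)) (m : L)
    (s : Submonoid.powers (∏ i ∈ T, x i)) :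
    fL x φ T (LocalizedModule.mk m s) = LocalizedModule.mk (φ m) s := by
  exact IsLocalizedModule.map_LocalizedModules _ φ m s

/-- functoriality of the Cech cochains -/
def fC (φ : L →ₗ[A] L') (p : ℕ) : cechC A x L p →ₗ[A] cechC A x L' p :=
  LinearMap.pi fun T => (fL x φ T.1).comp (LinearMap.proj T)

@[simp] lemma fC_apply (φ : L →ₗ[A] L') (p : ℕ) (c : cechC A x L p) (T) :
    fC x φ p c T = fL x φ T.1 (c T) := rfl

lemma fL_cechMap (φ : L →ₗ[A] L') (S T : Finset (Fin n)) (h : S ⊆ T) (c : cechL A x L S) :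
    fL x φ T (cechMap A x L S T h c) = cechMap A x L' S T h (fL x φ S c) := by
  obtain ⟨m, k, rfl⟩ := exists_mk x S c
  rw [cechMap_mk, fL_mk, fL_mk, cechMap_mk, map_smul]

lemma cechD_apply (p : ℕ) (c : cechC A x L p) (T) :
    cechD A x L p c T = ∑ j ∈ T.1.attach,
      ((-1 : A) ^ (T.1.filter (fun a => a < j.1)).card) •
        (cechMap A x L (T.1.erase j.1) T.1 (Finset.erase_subset _ _))
          (c ⟨T.1.erase j.1, by simp [Finset.card_erase_of_mem j.2, T.2]⟩) := by
  simp [cechD]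

lemma fC_D (φ : L →ₗ[A] L') (p : ℕ) (c : cechC A x L p) :
    fC x φ (p + 1) (cechD A x L p c) = cechD A x L' p (fC x φ p c) := by
  funext T
  rw [fC_apply, cechD_apply, cechD_apply, map_sum]
  refine Finset.sum_congr rfl fun j _ => ?_
  rw [map_smul, fL_cechMap, fC_apply]

lemma fC_Dprev (φ : L →ₗ[A] L') (p : ℕ) (c : cechC A x L (p - 1)) :
    fC x φ p (cechDprev A x L p c) = cechDprev A x L' p (fC x φ (p - 1) c) := by
  cases p with
  | zero => simp [cechDprev]
  | succ q => exact fC_D x φ q c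

lemma cechMap_comp (S T U : Finset (Fin n)) (h : S ⊆ T) (h' : T ⊆ U) (c : cechL A x L S) :
    cechMap A x L T U h' (cechMap A x L S T h c) = cechMap A x L S U (h.trans h') c := by
  obtain ⟨m, k, rfl⟩ := exists_mk x S c
  rw [cechMap_mk, cechMap_mk, cechMap_mk, ← mul_smul, ← mul_pow]
  congr 3
  rw [← Finset.sdiff_union_sdiff_cancel h' h, Finset.prod_union]
  exact Finset.disjoint_left.2 fun a ha hb => by
    simp at ha hb; exact ha.2 hb.1

/-- restriction of a cochain along `S ⊆ T`, extended by zero. -/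
def Gx {p : ℕ} (c : cechC A x L p) (T S : Finset (Fin n)) : cechL A x L T := by
  classical
  exact if h : S.card = p ∧ S ⊆ T then cechMap A x L S T h.2 (c ⟨S, h.1⟩) else 0

lemma Gx_pos {p : ℕ} (c : cechC A x L p) (T S : Finset (Fin n)) (h : S.card = p) (h' : S ⊆ T) :
    Gx x c T S = cechMap A x L S T h' (c ⟨S, h⟩) := by
  simp [Gx, h, h']

/-- the sign -/
def sg (j : Fin n) (T : Finset (Fin n)) : A := (-1 : A) ^ (T.filter (fun a => a < j)).card

lemma cechD_apply' (p : ℕ) (c : cechC A x L p) (T) :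
    cechD A x L p c T = ∑ j ∈ T.1, (sg j T.1 : A) • Gx x c T.1 (T.1.erase j) := by
  rw [cechD_apply, ← Finset.sum_attach T.1]
  refine Finset.sum_congr rfl fun j _ => ?_
  rw [Gx_pos x c T.1 _ (by simp [Finset.card_erase_of_mem j.2, T.2]) (Finset.erase_subset _ _)]
  rfl

lemma cechMap_Gx {p : ℕ} (c : cechC A x L p) (T U S : Finset (Fin n)) (h : S ⊆ T) (h' : T ⊆ U) :
    cechMap A x L T U h' (Gx x c T S) = Gx x c U S := by
  by_cases hp : S.card = p
  · rw [Gx_pos x c T S hp h, Gx_pos x c U S hp (h.trans h'), cechMap_comp]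
  · simp [Gx, hp]

lemma sg_erase (j k : Fin n) (T : Finset (Fin n)) (hj : j ∈ T) :
    (sg k T : A) = (if j < k then -1 else 1) * sg k (T.erase j) := by
  unfold sg
  by_cases h : j < k
  · have : (T.filter (fun a => a < k)) = insert j ((T.erase j).filter (fun a => a < k)) := by
      ext a; by_cases ha : a = j
      · subst ha; simp [hj, h]
      · simp [ha]
    rw [this, Finset.card_insert_of_notMem (by simp), pow_succ]
    simp [h]
  · have : (T.filter (fun a => a < k)) = ((T.erase j).filter (fun a => a < k)) := by
      ext a; by_cases ha : a = j
      · subst ha; simp [h]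
      · simp [ha]
    rw [this]; simp [h]

lemma sg_swap (j k : Fin n) (T : Finset (Fin n)) (hj : j ∈ T) (hk : k ∈ T) (hjk : j ≠ k) :
    (sg j T * sg k (T.erase j) : A) = - (sg k T * sg j (T.erase k)) := by
  rw [sg_erase (A := A) j k T hj, sg_erase (A := A) k j T hk]
  rcases lt_or_gt_of_ne hjk with h | h
  · simp [h, not_lt.2 h.le]; ring
  · simp [h, not_lt.2 h.le]; ring

lemma cechD_D (p : ℕ) (c : cechC A x L p) : cechD A x L (p + 1) (cechD A x L p c) = 0 := by
  funext T
  rw [cechD_apply']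
  have key : ∀ j ∈ T.1, (sg j T.1 : A) • Gx x (cechD A x L p c) T.1 (T.1.erase j) =
      ∑ k ∈ T.1.erase j, ((sg j T.1 * sg k (T.1.erase j) : A)) •
        Gx x c T.1 ((T.1.erase j).erase k) := by
    intro j hj
    rw [Gx_pos x _ T.1 _ (by simp [Finset.card_erase_of_mem hj, T.2]) (Finset.erase_subset _ _),
      cechD_apply', map_sum, Finset.smul_sum]
    refine Finset.sum_congr rfl fun k _ => ?_
    rw [map_smul, cechMap_Gx x c _ _ _ (Finset.erase_subset _ _), mul_smul]
  rw [Finset.sum_congr rfl key, Finset.sum_sigma']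
  refine Finset.sum_involution (fun a _ => ⟨a.2, a.1⟩) ?_ ?_ ?_ ?_
  · rintro ⟨j, k⟩ h
    simp only [Finset.mem_sigma, Finset.mem_erase] at h
    rw [Finset.erase_right_comm, sg_swap j k T.1 h.1 h.2.2 (Ne.symm h.2.1), neg_smul,
      neg_add_cancel]
  · rintro ⟨j, k⟩ h _ e
    simp only [Finset.mem_sigma, Finset.mem_erase] at h
    simp at e
    exact h.2.1 e.1
  · rintro ⟨j, k⟩ h
    simp only [Finset.mem_sigma, Finset.mem_erase] at h ⊢
    exact ⟨h.2.2, fun e => h.2.1 e.symm, h.1⟩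
  · rintro ⟨j, k⟩ h
    rfl

lemma cechD_Dprev (p : ℕ) (c : cechC A x L (p - 1)) :
    cechD A x L p (cechDprev A x L p c) = 0 := by
  cases p with
  | zero => simp [cechDprev]
  | succ q => exact cechD_D x q c

end
end CB

namespace CB
noncomputable section

variable {A : Type} [CommRing A] {n : ℕ} (x : Fin n → A)
variable {L L' L'' : Type} [AddCommGroup L] [Module A L] [AddCommGroup L'] [Module A L']
  [AddCommGroup L''] [Module A L'']

/-- the cocycles -/
abbrev Zc (L : Type) [AddCommGroup L] [Module A L] (i : ℕ) : Submodule A (cechC A x L i) :=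
  LinearMap.ker (cechD A x L i)

/-- class of a cocycle -/
def lcMk (L : Type) [AddCommGroup L] [Module A L] (i : ℕ) : Zc x L i →ₗ[A] lcMod A x L i :=
  Submodule.mkQ (Submodule.comap (LinearMap.ker (cechD A x L i)).subtype
      (LinearMap.range (cechDprev A x L i)))

lemma lcMk_surj (i : ℕ) : Function.Surjective (lcMk x L i) :=
  Submodule.mkQ_surjective _

lemma lcMk_eq_zero (i : ℕ) (z : Zc x L i) :
    lcMk x L i z = 0 ↔ ∃ b, cechDprev A x L i b = z.1 :=
  Submodule.Quotient.mk_eq_zero _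

/-- maps out of local cohomology -/
def lcLift {V : Type} [AddCommGroup V] [Module A V] (i : ℕ) (h : Zc x L i →ₗ[A] V)
    (hz : ∀ z : Zc x L i, (∃ b, cechDprev A x L i b = z.1) → h z = 0) :
    lcMod A x L i →ₗ[A] V :=
  Submodule.liftQ _ h (fun z hz' => hz z hz')

lemma lcLift_mk {V : Type} [AddCommGroup V] [Module A V] (i : ℕ) (h : Zc x L i →ₗ[A] V)
    (hz) (z : Zc x L i) : lcLift x i h hz (lcMk x L i z) = h z := rfl

/-- functoriality on cocycles -/
def fZ (φ : L →ₗ[A] L') (i : ℕ) : Zc x L i →ₗ[A] Zc x L' i :=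
  (fC x φ i).restrict (fun c hc => by
    rw [LinearMap.mem_ker] at hc ⊢; rw [← fC_D, hc, map_zero])

@[simp] lemma fZ_coe (φ : L →ₗ[A] L') (i : ℕ) (z : Zc x L i) :
    ((fZ x φ i z : Zc x L' i) : cechC A x L' i) = fC x φ i z.1 := rfl

/-- functoriality of local cohomology -/
def lcMap (φ : L →ₗ[A] L') (i : ℕ) : lcMod A x L i →ₗ[A] lcMod A x L' i :=
  lcLift x i ((lcMk x L' i).comp (fZ x φ i)) (by
    rintro z ⟨b, hb⟩
    rw [LinearMap.comp_apply, lcMk_eq_zero]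
    exact ⟨fC x φ (i - 1) b, by rw [← fC_Dprev, hb]; rfl⟩)

lemma lcMap_mk (φ : L →ₗ[A] L') (i : ℕ) (z : Zc x L i) :
    lcMap x φ i (lcMk x L i z) = lcMk x L' i (fZ x φ i z) := rfl

lemma fL_comp (φ : L →ₗ[A] L') (ψ : L' →ₗ[A] L'') (T : Finset (Fin n)) (c) :
    fL x (ψ.comp φ) T c = fL x ψ T (fL x φ T c) := by
  obtain ⟨m, k, rfl⟩ := exists_mk x T c
  simp [fL_mk]

lemma fL_id (T : Finset (Fin n)) (c) : fL x (LinearMap.id : L →ₗ[A] L) T c = c := by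
  obtain ⟨m, k, rfl⟩ := exists_mk x T c
  simp [fL_mk]

lemma fL_add (φ ψ : L →ₗ[A] L') (T : Finset (Fin n)) : fL x (φ + ψ) T = fL x φ T + fL x ψ T := by
  simp [fL]

lemma fL_smul (a : A) (φ : L →ₗ[A] L') (T : Finset (Fin n)) : fL x (a • φ) T = a • fL x φ T := by
  simp [fL]

lemma lcMap_comp (φ : L →ₗ[A] L') (ψ : L' →ₗ[A] L'') (i : ℕ) (h) :
    lcMap x (ψ.comp φ) i h = lcMap x ψ i (lcMap x φ i h) := by
  obtain ⟨z, rfl⟩ := lcMk_surj x i h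
  simp only [lcMap_mk]
  congr 1
  ext T
  simp [fL_comp]

lemma lcMap_id (i : ℕ) (h) : lcMap x (LinearMap.id : L →ₗ[A] L) i h = h := by
  obtain ⟨z, rfl⟩ := lcMk_surj x i h
  simp only [lcMap_mk]
  congr 1
  ext T
  simp [fL_id]

lemma lcMap_add (φ ψ : L →ₗ[A] L') (i : ℕ) : lcMap x (φ + ψ) i = lcMap x φ i + lcMap x ψ i := by
  ext h
  obtain ⟨z, rfl⟩ := lcMk_surj x i h
  rw [LinearMap.add_apply]
  simp only [lcMap_mk]
  rw [← map_add]
  congr 1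
  ext T
  simp [fL_add]

lemma lcMap_smul (a : A) (φ : L →ₗ[A] L') (i : ℕ) : lcMap x (a • φ) i = a • lcMap x φ i := by
  ext h
  obtain ⟨z, rfl⟩ := lcMk_surj x i h
  rw [LinearMap.smul_apply]
  simp only [lcMap_mk]
  rw [← map_smul]
  congr 1
  ext T
  simp [fL_smul]

lemma lcMap_sum {ι : Type} (s : Finset ι) (φ : ι → L →ₗ[A] L') (i : ℕ) :
    lcMap x (∑ k ∈ s, φ k) i = ∑ k ∈ s, lcMap x (φ k) i := by
  let F : (L →ₗ[A] L') →+ (lcMod A x L i →ₗ[A] lcMod A x L' i) :=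
    AddMonoidHom.mk' (fun φ => lcMap x φ i) (fun φ ψ => lcMap_add x φ ψ i)
  exact map_sum F φ s

lemma lcMap_lsmul (a : A) (i : ℕ) (h : lcMod A x L i) :
    lcMap x (a • LinearMap.id : L →ₗ[A] L) i h = a • h := by
  rw [lcMap_smul, LinearMap.smul_apply, lcMap_id]

/-! exactness of the cochain functor -/

lemma fC_inj (φ : L →ₗ[A] L') (hφ : Function.Injective φ) (p : ℕ) :
    Function.Injective (fC x φ p) := by
  intro c c' h
  funext T
  exact IsLocalizedModule.map_injective _ _ _ φ hφ (congrFun h T)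

lemma fC_surj (φ : L →ₗ[A] L') (hφ : Function.Surjective φ) (p : ℕ) :
    Function.Surjective (fC x φ p) := by
  intro c
  choose b hb using fun T : {S : Finset (Fin n) // S.card = p} =>
    IsLocalizedModule.map_surjective (Submonoid.powers (∏ i ∈ T.1, x i))
      (LocalizedModule.mkLinearMap (Submonoid.powers (∏ i ∈ T.1, x i)) L)
      (LocalizedModule.mkLinearMap (Submonoid.powers (∏ i ∈ T.1, x i)) L') φ hφ (c T)
  exact ⟨b, funext hb⟩

lemma fC_exact (φ : L →ₗ[A] L') (ψ : L' →ₗ[A] L'') (h : Function.Exact φ ψ) (p : ℕ)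
    (c : cechC A x L' p) (hc : fC x ψ p c = 0) : ∃ b, fC x φ p b = c := by
  choose b hb using fun T : {S : Finset (Fin n) // S.card = p} =>
    (IsLocalizedModule.map_exact (Submonoid.powers (∏ i ∈ T.1, x i))
      (LocalizedModule.mkLinearMap (Submonoid.powers (∏ i ∈ T.1, x i)) L)
      (LocalizedModule.mkLinearMap (Submonoid.powers (∏ i ∈ T.1, x i)) L')
      (LocalizedModule.mkLinearMap (Submonoid.powers (∏ i ∈ T.1, x i)) L'') φ ψ h (c T)).1
      (congrFun hc T)
  exact ⟨b, funext hb⟩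

lemma fC_comp_zero (φ : L →ₗ[A] L') (ψ : L' →ₗ[A] L'') (h : Function.Exact φ ψ) (p : ℕ)
    (c : cechC A x L p) : fC x ψ p (fC x φ p c) = 0 := by
  funext T
  have : ψ.comp φ = 0 := h.linearMap_comp_eq_zero
  rw [fC_apply, fC_apply, ← fL_comp, this]
  simp [fL]

/-- A short exact sequence. -/
structure SES (φ : L →ₗ[A] L') (ψ : L' →ₗ[A] L'') : Prop where
  inj : Function.Injective φ
  surj : Function.Surjective ψ
  exact : Function.Exact φ ψ

variable {φ : L →ₗ[A] L'} {ψ : L' →ₗ[A] L''}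

lemma les2 (S : SES φ ψ) (i : ℕ) (h : lcMod A x L' i) (hh : lcMap x ψ i h = 0) :
    ∃ u, lcMap x φ i u = h := by
  obtain ⟨z, rfl⟩ := lcMk_surj x i h
  rw [lcMap_mk, lcMk_eq_zero] at hh
  obtain ⟨b, hb⟩ := hh
  obtain ⟨b', rfl⟩ := fC_surj x ψ S.surj _ b
  rw [← fC_Dprev] at hb
  obtain ⟨c, hc⟩ := fC_exact x φ ψ S.exact i (z.1 - cechDprev A x L' i b') (by
    rw [map_sub, hb]; simp)
  have hcz : c ∈ Zc x L i := by
    rw [LinearMap.mem_ker]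
    apply fC_inj x φ S.inj
    rw [fC_D, hc, map_sub, cechD_Dprev, map_zero, sub_zero]
    exact z.2
  refine ⟨lcMk x L i ⟨c, hcz⟩, ?_⟩
  rw [lcMap_mk, ← sub_eq_zero, ← map_sub, lcMk_eq_zero]
  refine ⟨- b', ?_⟩
  simp [hc]

/-- the connecting graph at the level of cochains -/
def dE (φ : L →ₗ[A] L') (ψ : L' →ₗ[A] L'') (i : ℕ) :
    Submodule A (cechC A x L' i × Zc x L'' i × Zc x L (i + 1)) where
  carrier := {t | fC x ψ i t.1 = t.2.1.1 ∧ cechD A x L' i t.1 = fC x φ (i + 1) t.2.2.1}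
  add_mem' := by
    rintro a b ⟨h1, h2⟩ ⟨h3, h4⟩
    exact ⟨by simp [h1, h3], by simp [h2, h4]⟩
  zero_mem' := by simp
  smul_mem' := by
    rintro r a ⟨h1, h2⟩
    exact ⟨by simp [h1], by simp [h2]⟩

/-- the graph of the connecting map -/
def dG (φ : L →ₗ[A] L') (ψ : L' →ₗ[A] L'') (i : ℕ) :
    Submodule A (lcMod A x L'' i × lcMod A x L (i + 1)) :=
  (dE x φ ψ i).map (((lcMk x L'' i).prodMap (lcMk x L (i + 1))).comp (LinearMap.snd A _ _))

lemma mem_dG (i : ℕ) (h3 h1) : (h3, h1) ∈ dG x φ ψ i ↔ ∃ (b : cechC A x L' i) (z : Zc x L'' i)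
    (e : Zc x L (i + 1)), fC x ψ i b = z.1 ∧ cechD A x L' i b = fC x φ (i + 1) e.1 ∧
      lcMk x L'' i z = h3 ∧ lcMk x L (i + 1) e = h1 := by
  constructor
  · rintro ⟨⟨b, z, e⟩, ⟨h1, h2⟩, h⟩
    simp at h
    exact ⟨b, z, e, h1, h2, h.1, h.2⟩
  · rintro ⟨b, z, e, h1, h2, h3, h4⟩
    exact ⟨⟨b, z, e⟩, ⟨h1, h2⟩, by simp [h3, h4]⟩

lemma dG_total (S : SES φ ψ) (i : ℕ) (h3) : ∃ h1, (h3, h1) ∈ dG x φ ψ i := by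
  obtain ⟨z, rfl⟩ := lcMk_surj x i h3
  obtain ⟨b, hb⟩ := fC_surj x ψ S.surj _ z.1
  obtain ⟨e, he⟩ := fC_exact x φ ψ S.exact (i + 1) (cechD A x L' i b) (by
    rw [fC_D, hb]; exact z.2)
  have hez : e ∈ Zc x L (i + 1) := by
    rw [LinearMap.mem_ker]
    apply fC_inj x φ S.inj
    rw [fC_D, he, cechD_D, map_zero]
  exact ⟨lcMk x L (i + 1) ⟨e, hez⟩, (mem_dG x i _ _).2 ⟨b, z, ⟨e, hez⟩, hb, he.symm, rfl, rfl⟩⟩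

lemma dG_fun (S : SES φ ψ) (i : ℕ) (h1) (h : (0, h1) ∈ dG x φ ψ i) : h1 = 0 := by
  obtain ⟨b, z, e, hb, he, hz, rfl⟩ := (mem_dG x i _ _).1 h
  rw [lcMk_eq_zero] at hz
  obtain ⟨y, hy⟩ := hz
  obtain ⟨y, rfl⟩ := fC_surj x ψ S.surj _ y
  rw [← fC_Dprev, ← hb] at hy
  obtain ⟨c, hc⟩ := fC_exact x φ ψ S.exact i (b - cechDprev A x L' i y) (by
    rw [map_sub, hy, sub_self])
  rw [lcMk_eq_zero]
  refine ⟨c, ?_⟩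
  apply fC_inj x φ S.inj
  change fC x φ (i + 1) (cechD A x L i c) = _
  rw [fC_D, hc, map_sub, cechD_Dprev, sub_zero, he]

lemma dG_bij (S : SES φ ψ) (i : ℕ) : Function.Bijective
    ((LinearMap.fst A (lcMod A x L'' i) (lcMod A x L (i + 1))).comp (dG x φ ψ i).subtype) := by
  constructor
  · rw [← LinearMap.ker_eq_bot, LinearMap.ker_eq_bot']
    rintro ⟨⟨h3, h1⟩, h⟩ h0
    simp at h0
    subst h0
    have := dG_fun x S i h1 h
    subst this
    rfl
  · intro h3
    obtain ⟨h1, h⟩ := dG_total x S i h3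
    exact ⟨⟨_, h⟩, rfl⟩

/-- The connecting homomorphism. -/
def lcDelta (S : SES φ ψ) (i : ℕ) : lcMod A x L'' i →ₗ[A] lcMod A x L (i + 1) :=
  ((LinearMap.snd A _ _).comp (dG x φ ψ i).subtype).comp
    (LinearEquiv.ofBijective _ (dG_bij x S i)).symm.toLinearMap

lemma lcDelta_eq (S : SES φ ψ) (i : ℕ) (h3 h1) (h : (h3, h1) ∈ dG x φ ψ i) :
    lcDelta x S i h3 = h1 := by
  have : (LinearEquiv.ofBijective _ (dG_bij x S i)).symm h3 = ⟨_, h⟩ := by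
    rw [LinearEquiv.symm_apply_eq]; rfl
  change ((LinearEquiv.ofBijective _ (dG_bij x S i)).symm h3).1.2 = h1
  rw [this]

lemma lcDelta_spec (S : SES φ ψ) (i : ℕ) (h3) : (h3, lcDelta x S i h3) ∈ dG x φ ψ i := by
  obtain ⟨h1, h⟩ := dG_total x S i h3
  rwa [lcDelta_eq x S i _ _ h]

lemma les3 (S : SES φ ψ) (i : ℕ) (h3) (h : lcDelta x S i h3 = 0) :
    ∃ h2, lcMap x ψ i h2 = h3 := by
  have := lcDelta_spec x S i h3
  rw [h] at this
  obtain ⟨b, z, e, hb, he, rfl, h0⟩ := (mem_dG x i _ _).1 this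
  rw [lcMk_eq_zero] at h0
  obtain ⟨y, hy⟩ := h0
  change cechD A x L i y = _ at hy
  refine ⟨lcMk x L' i ⟨b - fC x φ i y, ?_⟩, ?_⟩
  · rw [LinearMap.mem_ker, map_sub, ← fC_D, hy, he, sub_self]
  · rw [lcMap_mk]
    congr 1
    ext1
    rw [fZ_coe, map_sub, fC_comp_zero x φ ψ S.exact, sub_zero, hb]

lemma les1 (S : SES φ ψ) (i : ℕ) (h1) (h : lcMap x φ (i + 1) h1 = 0) :
    ∃ h3, lcDelta x S i h3 = h1 := by
  obtain ⟨e, rfl⟩ := lcMk_surj x (i + 1) h1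
  rw [lcMap_mk, lcMk_eq_zero] at h
  obtain ⟨b, hb⟩ := h
  change cechD A x L' i b = fC x φ (i + 1) e.1 at hb
  refine ⟨lcMk x L'' i ⟨fC x ψ i b, ?_⟩, lcDelta_eq x S i _ _ ?_⟩
  · rw [LinearMap.mem_ker, ← fC_D, hb, fC_comp_zero x φ ψ S.exact]
  · exact (mem_dG x i _ _).2 ⟨b, _, e, rfl, hb, rfl, rfl⟩

lemma les1_zero (S : SES φ ψ) (h1) (h : lcMap x φ 0 h1 = 0) : h1 = 0 := by
  obtain ⟨e, rfl⟩ := lcMk_surj x 0 h1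
  rw [lcMap_mk, lcMk_eq_zero] at h
  obtain ⟨b, hb⟩ := h
  rw [lcMk_eq_zero]
  refine ⟨0, ?_⟩
  apply fC_inj x φ S.inj
  rw [map_zero, map_zero]
  exact hb

/-- vanishing above the number of elements -/
lemma lc_vanish_of_gt (i : ℕ) (hi : n < i) (h : lcMod A x L i) : h = 0 := by
  obtain ⟨z, rfl⟩ := lcMk_surj x i h
  rw [lcMk_eq_zero]
  refine ⟨0, ?_⟩
  funext T
  have := T.1.card_le_univ
  simp at this
  have := T.2
  omega

lemma lcVanish_iff (i : ℕ) : lcVanish A x L i ↔ ∀ h : lcMod A x L i, h = 0 := by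
  constructor
  · intro H h
    obtain ⟨z, rfl⟩ := lcMk_surj x i h
    rw [lcMk_eq_zero]
    have := H z.1 z.2
    cases i with
    | zero => exact ⟨0, by simpa [cechDprev] using this.symm⟩
    | succ q => exact this
  · intro H c hc
    have := H (lcMk x L i ⟨c, hc⟩)
    rw [lcMk_eq_zero] at this
    cases i with
    | zero =>
      obtain ⟨b, hb⟩ := this
      change c = 0
      simpa [cechDprev] using hb.symm
    | succ q => exact this

end
end CB

namespace CB
noncomputable section

variable {A : Type} [CommRing A] {n : ℕ} (x : Fin n → A)
variable {L L' L'' : Type} [AddCommGroup L] [Module A L] [AddCommGroup L'] [Module A L']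
  [AddCommGroup L''] [Module A L'']

lemma sg_sq (j : Fin n) (T : Finset (Fin n)) : (sg j T * sg j T : A) = 1 := by
  unfold sg
  rw [← mul_pow]; simp

lemma tors_lift (j : Fin n) (S : Finset (Fin n)) (hj : j ∉ S) (c : cechL A x L (insert j S)) :
    ∃ k, ∀ k' ≥ k, ∃ b : cechL A x L S,
      cechMap A x L S (insert j S) (Finset.subset_insert _ _) b = x j ^ k' • c := by
  obtain ⟨m, k, rfl⟩ := exists_mk x _ c
  refine ⟨k, fun k' hk => ⟨x j ^ (k' - k) • LocalizedModule.mk m (pw x S k), ?_⟩⟩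
  rw [map_smul, cechMap_mk]
  have : insert j S \ S = {j} := by
    ext a; by_cases ha : a = j
    · subst ha; simp [hj]
    · simp [ha]
  rw [this, Finset.prod_singleton, ← LocalizedModule.smul'_mk, ← mul_smul, ← pow_add,
    Nat.sub_add_cancel hk]

lemma tors_zero (j : Fin n) (S : Finset (Fin n)) (hj : j ∉ S) (u : cechL A x L S)
    (h : cechMap A x L S (insert j S) (Finset.subset_insert _ _) u = 0) :
    ∃ k, ∀ k' ≥ k, x j ^ k' • u = 0 := by
  obtain ⟨m, k, rfl⟩ := exists_mk x _ u
  rw [cechMap_mk] at h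
  have hs : insert j S \ S = {j} := by
    ext a; by_cases ha : a = j
    · subst ha; simp [hj]
    · simp [ha]
  have h0 : (0 : cechL A x L (insert j S)) = LocalizedModule.mk 0 (pw x (insert j S) 0) := by
    rw [LocalizedModule.zero_mk]
  rw [h0, mk_eq_iff] at h
  obtain ⟨e, he⟩ := h
  rw [hs, Finset.prod_singleton, Finset.prod_insert hj, add_zero, smul_zero, ← mul_smul] at he
  refine ⟨e + k, fun k' hk => ?_⟩
  have h0 : (0 : cechL A x L S) = LocalizedModule.mk 0 (pw x S 0) := by
    rw [LocalizedModule.zero_mk]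
  rw [LocalizedModule.smul'_mk, h0, mk_eq_iff]
  refine ⟨e, ?_⟩
  rw [smul_zero, add_zero, ← mul_smul]
  have : (∏ i ∈ S, x i) ^ e * x j ^ k' =
      x j ^ (k' - (e + k)) * ((x j * ∏ i ∈ S, x i) ^ e * x j ^ k) := by
    rw [mul_pow]
    have : x j ^ k' = x j ^ (k' - (e + k)) * x j ^ e * x j ^ k := by
      rw [mul_assoc, ← pow_add, ← pow_add, Nat.sub_add_cancel hk]
    rw [this]; ring
  rw [this, mul_smul, he, smul_zero]

/-- the total obstruction of a cochain is torsion once it is locally so. -/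
lemma tors_zero_cochain (j : Fin n) (p : ℕ) (u : cechC A x L p)
    (h0 : ∀ T : {S : Finset (Fin n) // S.card = p}, j ∈ T.1 → u T = 0)
    (h1 : ∀ T : {S : Finset (Fin n) // S.card = p}, j ∉ T.1 →
      cechMap A x L T.1 (insert j T.1) (Finset.subset_insert _ _) (u T) = 0) :
    ∃ N, x j ^ N • u = 0 := by
  have : ∀ T : {S : Finset (Fin n) // S.card = p}, ∃ k, ∀ k' ≥ k, x j ^ k' • u T = 0 := by
    intro T
    by_cases hT : j ∈ T.1
    · exact ⟨0, fun k' _ => by rw [h0 T hT, smul_zero]⟩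
    · exact tors_zero x j T.1 hT (u T) (h1 T hT)
  choose k hk using this
  refine ⟨Finset.univ.sup k, ?_⟩
  funext T
  exact hk T _ (Finset.le_sup (Finset.mem_univ T))

lemma exists_insert_eq (j : Fin n) (U : Finset (Fin n)) (hj : j ∈ U) :
    ∃ S, j ∉ S ∧ U = insert j S :=
  ⟨U.erase j, by simp, (Finset.insert_erase hj).symm⟩

lemma tors_b (j : Fin n) (q : ℕ) (c : cechC A x L (q + 1)) :
    ∃ (N : ℕ) (b : cechC A x L q), (∀ S, j ∈ S.1 → b S = 0) ∧
      ∀ U : {S : Finset (Fin n) // S.card = q + 1}, j ∈ U.1 →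
        Gx x b U.1 (U.1.erase j) = x j ^ N • c U := by
  have : ∀ S : {S : Finset (Fin n) // S.card = q}, ∃ k, ∀ k' ≥ k, ∃ b : cechL A x L S.1,
      (j ∈ S.1 → b = 0) ∧ (∀ h : j ∉ S.1,
      cechMap A x L S.1 (insert j S.1) (Finset.subset_insert _ _) b = x j ^ k' •
        c ⟨insert j S.1, by rw [Finset.card_insert_of_notMem h, S.2]⟩) := by
    intro S
    by_cases hS : j ∈ S.1
    · exact ⟨0, fun k' _ => ⟨0, fun _ => rfl, fun h => absurd hS h⟩⟩
    · obtain ⟨k, hk⟩ := tors_lift x j S.1 hS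
        (c ⟨insert j S.1, by rw [Finset.card_insert_of_notMem hS, S.2]⟩)
      refine ⟨k, fun k' hk' => ?_⟩
      obtain ⟨b, hb⟩ := hk k' hk'
      exact ⟨b, fun h => absurd h hS, fun _ => hb⟩
  choose k hk using this
  choose b hb0 hb using fun S => hk S (Finset.univ.sup k) (Finset.le_sup (Finset.mem_univ S))
  refine ⟨Finset.univ.sup k, b, hb0, ?_⟩
  rintro ⟨U, hU⟩ hj
  obtain ⟨S, hS, rfl⟩ := exists_insert_eq j U hj
  have hc : S.card = q := by rw [Finset.card_insert_of_notMem hS] at hU; omega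
  simp only [Finset.erase_insert hS]
  rw [Gx_pos x b _ S hc (Finset.subset_insert _ _)]
  exact hb ⟨S, hc⟩ hS

lemma Gx_smul {p : ℕ} (a : A) (c : cechC A x L p) (T S : Finset (Fin n)) :
    Gx x (a • c) T S = a • Gx x c T S := by
  unfold Gx
  split_ifs
  · simp
  · simp

lemma tors_main (j : Fin n) (q : ℕ) (c : cechC A x L (q + 1))
    (hc : cechD A x L (q + 1) c = 0) :
    ∃ (N : ℕ) (b : cechC A x L q), cechD A x L q b = x j ^ N • c := by
  obtain ⟨N, b, hb0, hb⟩ := tors_b x j q c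
  let b' : cechC A x L q := fun S => (sg j S.1 : A) • b S
  have hG : ∀ T S, Gx x b' T S = (sg j S : A) • Gx x b T S := by
    intro T S
    unfold Gx
    split_ifs
    · simp [b']
    · simp
  have hG0 : ∀ T S, j ∈ S → Gx x b T S = 0 := by
    intro T S hS
    unfold Gx
    split_ifs with h
    · rw [hb0 ⟨S, h.1⟩ hS, map_zero]
    · rfl
  obtain ⟨N', hN'⟩ := tors_zero_cochain x j (q + 1) (cechD A x L q b' - x j ^ N • c) (by
      intro T hT
      rw [Pi.sub_apply, cechD_apply', Finset.sum_eq_single_of_mem j hT]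
      · rw [hG, hb T hT, ← mul_smul, sg_erase j j T.1 hT]
        simp [sg_sq]
      · intro k hk hkj
        rw [hG, hG0 _ _ (by simp [Ne.symm hkj, hT]), smul_zero, smul_zero]) (by
      intro T hT
      have hTU : T.1 ⊆ insert j T.1 := Finset.subset_insert _ _
      have hU : (insert j T.1).card = q + 1 + 1 := by
        rw [Finset.card_insert_of_notMem hT, T.2]
      have h1 := congrFun hc ⟨insert j T.1, hU⟩
      rw [cechD_apply'] at h1
      simp only at h1
      rw [Finset.sum_insert hT, Finset.erase_insert hT] at h1
      rw [Pi.sub_apply, map_sub, cechD_apply', map_sum]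
      have key : ∀ k ∈ T.1, cechMap A x L T.1 (insert j T.1) hTU
          ((sg k T.1 : A) • Gx x b' T.1 (T.1.erase k)) =
          (- (sg j T.1 : A) * x j ^ N) • ((sg k (insert j T.1) : A) •
            Gx x c (insert j T.1) ((insert j T.1).erase k)) := by
        intro k hk
        have hjk : j ≠ k := fun e => hT (e ▸ hk)
        have e1 : ((insert j T.1).erase k).erase j = T.1.erase k := by
          rw [Finset.erase_right_comm, Finset.erase_insert hT]
        have hcard : ((insert j T.1).erase k).card = q + 1 := by
          rw [Finset.card_erase_of_mem (Finset.mem_insert_of_mem hk), hU]; rfl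
        have h2 := hb ⟨(insert j T.1).erase k, hcard⟩ (by simp [hjk])
        simp only [e1] at h2
        have h3 : Gx x b (insert j T.1) (T.1.erase k) =
            x j ^ N • Gx x c (insert j T.1) ((insert j T.1).erase k) := by
          rw [← cechMap_Gx x b ((insert j T.1).erase k) _ _
            (Finset.erase_subset_erase _ hTU) (Finset.erase_subset _ _), h2, map_smul,
            Gx_pos x c _ _ hcard (Finset.erase_subset _ _)]
        rw [map_smul, cechMap_Gx x b' _ _ _ (Finset.erase_subset _ _) hTU, hG, h3,
          ← mul_smul, ← mul_smul, ← mul_smul]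
        congr 1
        rw [sg_erase (A := A) j k (insert j T.1) (Finset.mem_insert_self _ _),
          Finset.erase_insert hT, sg_erase (A := A) k j T.1 hk]
        rcases lt_or_gt_of_ne hjk with h | h
        · simp [h, not_lt.2 h.le]; ring
        · simp [h, not_lt.2 h.le]; ring
      rw [Finset.sum_congr rfl key, ← Finset.smul_sum]
      have h4 : ∑ k ∈ T.1, (sg k (insert j T.1) : A) •
            Gx x c (insert j T.1) ((insert j T.1).erase k) =
          - ((sg j (insert j T.1) : A) • Gx x c (insert j T.1) T.1) := by
        exact eq_neg_of_add_eq_zero_right h1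
      rw [h4, Pi.smul_apply, map_smul, ← Gx_pos x c _ T.1 T.2 hTU, smul_neg, ← neg_smul, ← mul_smul,
        sub_eq_zero]
      congr 1
      rw [sg_erase (A := A) j j (insert j T.1) (Finset.mem_insert_self _ _),
          Finset.erase_insert hT]
      have := sg_sq (A := A) j T.1
      simp
      linear_combination x j ^ N * this)
  refine ⟨N' + N, x j ^ N' • b', ?_⟩
  rw [smul_sub, sub_eq_zero] at hN'
  rw [map_smul, hN', ← mul_smul, pow_add]

lemma lc_torsion (j : Fin n) (i : ℕ) (h : lcMod A x L i) : ∃ N, x j ^ N • h = 0 := by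
  obtain ⟨z, rfl⟩ := lcMk_surj x i h
  cases i with
  | zero =>
    obtain ⟨N, hN⟩ := tors_zero_cochain x j 0 z.1 (by
      intro T hT
      have := T.2
      rw [Finset.card_eq_zero] at this
      rw [this] at hT
      simp at hT) (by
      rintro ⟨T, hT⟩ hj
      have h1 := congrFun z.2 ⟨insert j T, by rw [Finset.card_insert_of_notMem hj, hT]⟩
      rw [cechD_apply'] at h1
      have hT' := Finset.card_eq_zero.1 hT
      subst hT'
      simp only [Finset.sum_insert hj, Finset.sum_empty, add_zero, Finset.erase_insert hj] at h1
      rw [Gx_pos x _ _ _ hT (Finset.subset_insert _ _)] at h1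
      have h2 := congrArg (fun t => (sg j (insert j ∅) : A) • t) h1
      simp only [← mul_smul, sg_sq, one_smul] at h2
      exact h2.trans (smul_zero _))
    refine ⟨N, ?_⟩
    rw [← map_smul, lcMk_eq_zero]
    refine ⟨0, ?_⟩
    rw [map_zero]
    exact hN.symm
  | succ q =>
    obtain ⟨N, b, hb⟩ := tors_main x j q z.1 z.2
    refine ⟨N, ?_⟩
    rw [← map_smul, lcMk_eq_zero]
    exact ⟨b, hb⟩

end
end CB

namespace CB
noncomputable section

variable (R : Type) [CommRing R] {A : Type} [CommRing A] [Algebra R A] {n : ℕ} (x : Fin n → A)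
  (w : Fin n → ℤ)
variable {L L' L'' : Type} [AddCommGroup L] [Module A L] [AddCommGroup L'] [Module A L']
  [AddCommGroup L''] [Module A L'']

/-- A grading of `L`, presented by its projections. -/
structure Gr (L : Type) [AddCommGroup L] [Module A L] where
  pr : ℤ → L →+ L
  lin : ∀ μ (r : R) m, pr μ (algebraMap R A r • m) = algebraMap R A r • pr μ m
  idem : ∀ μ m, pr μ (pr μ m) = pr μ m
  shift : ∀ μ j m, pr (μ + w j) (x j • m) = x j • pr μ m
  tot : ∀ m, ∃ E : Finset ℤ, ∀ E', E ⊆ E' → ∑ μ ∈ E', pr μ m = m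

variable {R x w}

/-- homogeneous maps of degree `e` -/
def Hg (g : Gr R x w L) (g' : Gr R x w L') (e : ℤ) (φ : L → L') : Prop :=
  ∀ μ m, φ (g.pr μ m) = g'.pr (μ + e) (φ m)

lemma Gr.shift_prod (g : Gr R x w L) (T : Finset (Fin n)) (μ : ℤ) (m : L) :
    g.pr (μ + ∑ j ∈ T, w j) ((∏ j ∈ T, x j) • m) = (∏ j ∈ T, x j) • g.pr μ m := by
  classical
  induction T using Finset.induction_on generalizing μ with
  | empty => simp
  | insert j T hj ih =>
    rw [Finset.sum_insert hj, Finset.prod_insert hj, mul_smul, mul_smul, ← ih, ← g.shift]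
    congr 2; ring

lemma Gr.shift_pow (g : Gr R x w L) (T : Finset (Fin n)) (k : ℕ) (μ : ℤ) (m : L) :
    g.pr (μ + k * ∑ j ∈ T, w j) ((∏ j ∈ T, x j) ^ k • m) = (∏ j ∈ T, x j) ^ k • g.pr μ m := by
  induction k generalizing μ with
  | zero => simp
  | succ k ih =>
    rw [pow_succ', mul_smul, mul_smul, ← ih, ← g.shift_prod]
    congr 2; push_cast; ring

lemma Gr.shift_sub (g : Gr R x w L) (μ : ℤ) (j) (m : L) :
    g.pr μ (x j • m) = x j • g.pr (μ - w j) m := by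
  rw [← g.shift]; congr 2; ring

/-- projections are determined on localizations -/
lemma Gr.loc_wd (g : Gr R x w L) (T : Finset (Fin n)) (μ : ℤ) (m m' : L) (k k' : ℕ)
    (h : (LocalizedModule.mk m (pw x T k) : cechL A x L T) = LocalizedModule.mk m' (pw x T k')) :
    (LocalizedModule.mk (g.pr (μ + k * ∑ j ∈ T, w j) m) (pw x T k) : cechL A x L T) =
      LocalizedModule.mk (g.pr (μ + k' * ∑ j ∈ T, w j) m') (pw x T k') := by
  rw [mk_eq_iff] at h ⊢
  obtain ⟨e, he⟩ := h
  refine ⟨e, ?_⟩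
  rw [← g.shift_pow, ← g.shift_pow, he]
  congr 2
  push_cast; ring

/-- chosen numerator -/
def num (T : Finset (Fin n)) (c : cechL A x L T) : L := (exists_mk x T c).choose
/-- chosen exponent -/
def dexp (T : Finset (Fin n)) (c : cechL A x L T) : ℕ := (exists_mk x T c).choose_spec.choose

lemma mk_num (T : Finset (Fin n)) (c : cechL A x L T) :
    LocalizedModule.mk (num T c) (pw x T (dexp T c)) = c :=
  (exists_mk x T c).choose_spec.choose_spec.symm

/-- the projection on a localization -/
def Gr.locFun (g : Gr R x w L) (T : Finset (Fin n)) (μ : ℤ) (c : cechL A x L T) :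
    cechL A x L T :=
  LocalizedModule.mk (g.pr (μ + (dexp T c) * ∑ j ∈ T, w j) (num T c)) (pw x T (dexp T c))

lemma Gr.locFun_mk (g : Gr R x w L) (T : Finset (Fin n)) (μ : ℤ) (m : L) (k : ℕ) :
    g.locFun T μ (LocalizedModule.mk m (pw x T k)) =
      LocalizedModule.mk (g.pr (μ + k * ∑ j ∈ T, w j) m) (pw x T k) :=
  g.loc_wd T μ _ _ _ _ (mk_num T _)

lemma pw_mul (T : Finset (Fin n)) (k l : ℕ) : pw x T k * pw x T l = pw x T (k + l) := by
  ext; simp [pow_add]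

/-- common denominators -/
lemma exists_mk2 (T : Finset (Fin n)) (c c' : cechL A x L T) :
    ∃ m m' k, c = LocalizedModule.mk m (pw x T k) ∧ c' = LocalizedModule.mk m' (pw x T k) := by
  obtain ⟨m, k, rfl⟩ := exists_mk x T c
  obtain ⟨m', k', rfl⟩ := exists_mk x T c'
  refine ⟨(∏ i ∈ T, x i) ^ k' • m, (∏ i ∈ T, x i) ^ k • m', k + k', ?_, ?_⟩
  · rw [mk_eq_iff]; refine ⟨0, ?_⟩
    rw [← mul_smul, ← pow_add]; congr 2; ring
  · rw [mk_eq_iff]; refine ⟨0, ?_⟩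
    rw [← mul_smul, ← pow_add]; congr 2; ring

lemma mk_add_same (T : Finset (Fin n)) (m m' : L) (k : ℕ) :
    (LocalizedModule.mk m (pw x T k) + LocalizedModule.mk m' (pw x T k) : cechL A x L T) =
      LocalizedModule.mk (m + m') (pw x T k) := by
  rw [LocalizedModule.mk_add_mk, pw_mul, pw_smul, pw_smul, ← smul_add, mk_eq_iff]
  refine ⟨0, ?_⟩
  rw [← mul_smul, ← pow_add]; congr 2; ring

/-- `mk · (pw k)` as an additive map -/
def mkAdd (T : Finset (Fin n)) (k : ℕ) : L →+ cechL A x L T :=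
  AddMonoidHom.mk' (fun m => LocalizedModule.mk m (pw x T k)) (fun a b => (mk_add_same T a b k).symm)

lemma mkAdd_apply (T : Finset (Fin n)) (k : ℕ) (m : L) :
    mkAdd (x := x) T k m = LocalizedModule.mk m (pw x T k) := rfl

/-- grading on a localization -/
def Gr.loc (g : Gr R x w L) (T : Finset (Fin n)) : Gr R x w (cechL A x L T) where
  pr μ := AddMonoidHom.mk' (g.locFun T μ) (fun c c' => by
    obtain ⟨m, m', k, rfl, rfl⟩ := exists_mk2 T c c'
    rw [mk_add_same, g.locFun_mk, g.locFun_mk, g.locFun_mk, mk_add_same, map_add])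
  lin μ r c := by
    obtain ⟨m, k, rfl⟩ := exists_mk x T c
    simp only [AddMonoidHom.mk'_apply]
    rw [LocalizedModule.smul'_mk, g.locFun_mk, g.locFun_mk, LocalizedModule.smul'_mk, g.lin]
  idem μ c := by
    obtain ⟨m, k, rfl⟩ := exists_mk x T c
    simp only [AddMonoidHom.mk'_apply]
    rw [g.locFun_mk, g.locFun_mk, g.idem]
  shift μ j c := by
    obtain ⟨m, k, rfl⟩ := exists_mk x T c
    simp only [AddMonoidHom.mk'_apply]
    rw [LocalizedModule.smul'_mk, g.locFun_mk, g.locFun_mk, LocalizedModule.smul'_mk,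
      ← g.shift]
    congr 2; congr 1; ring
  tot c := by
    obtain ⟨m, k, rfl⟩ := exists_mk x T c
    simp only [AddMonoidHom.mk'_apply]
    obtain ⟨E, hE⟩ := g.tot m
    refine ⟨E.image (fun μ => μ - k * ∑ j ∈ T, w j), fun E' hE' => ?_⟩
    have h1 := hE (E'.image (fun μ => μ + k * ∑ j ∈ T, w j)) (by
      intro μ hμ
      rw [Finset.mem_image]
      exact ⟨μ - k * ∑ j ∈ T, w j, hE' (Finset.mem_image_of_mem _ hμ), by ring⟩)
    rw [Finset.sum_image (by intro a _ b _ h; simpa using h)] at h1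
    rw [Finset.sum_congr rfl (fun μ _ => (g.locFun_mk T μ m k).trans (mkAdd_apply T k _).symm),
      ← map_sum, h1, mkAdd_apply]

lemma Gr.loc_mk (g : Gr R x w L) (T : Finset (Fin n)) (μ : ℤ) (m : L) (k : ℕ) :
    (g.loc T).pr μ (LocalizedModule.mk m (pw x T k)) =
      LocalizedModule.mk (g.pr (μ + k * ∑ j ∈ T, w j) m) (pw x T k) :=
  g.locFun_mk T μ m k

/-- grading on a finite product -/
def Gr.pi {ι : Type} [Finite ι] {V : ι → Type} [∀ i, AddCommGroup (V i)] [∀ i, Module A (V i)]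
    (g : ∀ i, Gr R x w (V i)) : Gr R x w (∀ i, V i) where
  pr μ := AddMonoidHom.mk' (fun c i => (g i).pr μ (c i)) (fun c c' => by ext i; simp)
  lin μ r c := by ext i; simp [(g i).lin]
  idem μ c := by ext i; simp [(g i).idem]
  shift μ j c := by ext i; simp [(g i).shift]
  tot c := by
    classical
    have := Fintype.ofFinite ι
    choose E hE using fun i => (g i).tot (c i)
    refine ⟨Finset.univ.biUnion E, fun E' hE' => ?_⟩
    funext i
    rw [Finset.sum_apply]
    exact hE i E' (fun μ hμ => hE' (Finset.mem_biUnion.2 ⟨i, Finset.mem_univ _, hμ⟩))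

lemma Gr.pi_apply {ι : Type} [Finite ι] {V : ι → Type} [∀ i, AddCommGroup (V i)]
    [∀ i, Module A (V i)] (g : ∀ i, Gr R x w (V i)) (μ) (c : ∀ i, V i) (i : ι) :
    (Gr.pi g).pr μ c i = (g i).pr μ (c i) := rfl

/-- grading on a stable submodule -/
def Gr.sub (g : Gr R x w L) (K : Submodule A L) (hK : ∀ μ, ∀ m ∈ K, g.pr μ m ∈ K) :
    Gr R x w K where
  pr μ := AddMonoidHom.mk' (fun c => ⟨g.pr μ c.1, hK μ _ c.2⟩) (fun c c' => by ext; simp)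
  lin μ r c := by ext; simp [g.lin]
  idem μ c := by ext; simp [g.idem]
  shift μ j c := by ext; simp [g.shift]
  tot c := by
    obtain ⟨E, hE⟩ := g.tot c.1
    refine ⟨E, fun E' hE' => ?_⟩
    ext
    rw [AddSubmonoidClass.coe_finsetSum]
    exact hE E' hE'

lemma Gr.sub_coe (g : Gr R x w L) (K : Submodule A L) (hK) (μ) (m : K) :
    ((g.sub K hK).pr μ m : L) = g.pr μ m.1 := rfl

/-- grading on a quotient by a stable submodule -/
def Gr.quo (g : Gr R x w L) (K : Submodule A L) (hK : ∀ μ, ∀ m ∈ K, g.pr μ m ∈ K) :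
    Gr R x w (L ⧸ K) where
  pr μ := QuotientAddGroup.map K.toAddSubgroup K.toAddSubgroup (g.pr μ) (fun m hm => hK μ m hm)
  lin μ r c := by
    obtain ⟨c, rfl⟩ := Submodule.mkQ_surjective K c
    exact congrArg K.mkQ (g.lin μ r c)
  idem μ c := by
    obtain ⟨c, rfl⟩ := Submodule.mkQ_surjective K c
    exact congrArg K.mkQ (g.idem μ c)
  shift μ j c := by
    obtain ⟨c, rfl⟩ := Submodule.mkQ_surjective K c
    exact congrArg K.mkQ (g.shift μ j c)
  tot c := by
    obtain ⟨c, rfl⟩ := Submodule.mkQ_surjective K c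
    obtain ⟨E, hE⟩ := g.tot c
    refine ⟨E, fun E' hE' => ?_⟩
    have := congrArg K.mkQ (hE E' hE')
    rw [map_sum] at this
    exact this

lemma Gr.quo_mk (g : Gr R x w L) (K : Submodule A L) (hK) (μ) (m : L) :
    (g.quo K hK).pr μ (K.mkQ m) = K.mkQ (g.pr μ m) := rfl

/-- transport of the cochain grading -/
def Gr.C (g : Gr R x w L) (p : ℕ) : Gr R x w (cechC A x L p) := Gr.pi fun T => g.loc T.1

lemma Hg.fL {g : Gr R x w L} {g' : Gr R x w L'} {e : ℤ} {φ : L →ₗ[A] L'} (h : Hg g g' e φ)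
    (T : Finset (Fin n)) : Hg (g.loc T) (g'.loc T) e (fL x φ T) := by
  intro μ c
  obtain ⟨m, k, rfl⟩ := exists_mk x T c
  rw [g.loc_mk, fL_mk, fL_mk, g'.loc_mk, h]
  congr 2; congr 1; ring

lemma Hg.fC {g : Gr R x w L} {g' : Gr R x w L'} {e : ℤ} {φ : L →ₗ[A] L'} (h : Hg g g' e φ)
    (p : ℕ) : Hg (g.C p) (g'.C p) e (fC x φ p) := by
  intro μ c
  funext T
  exact h.fL T.1 μ (c T)

lemma Gr.cechMap (g : Gr R x w L) (S T : Finset (Fin n)) (hST : S ⊆ T) (μ : ℤ)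
    (c : cechL A x L S) :
    cechMap A x L S T hST ((g.loc S).pr μ c) = (g.loc T).pr μ (cechMap A x L S T hST c) := by
  obtain ⟨m, k, rfl⟩ := exists_mk x S c
  rw [g.loc_mk, cechMap_mk, cechMap_mk, g.loc_mk, ← g.shift_pow]
  congr 2; congr 1
  rw [← Finset.sum_sdiff hST]; ring

lemma Gr.sgn (g : Gr R x w L) (μ : ℤ) (k : ℕ) (m : L) :
    g.pr μ ((-1 : A) ^ k • m) = (-1 : A) ^ k • g.pr μ m := by
  have := g.lin μ ((-1) ^ k) m
  simpa using this

lemma Gr.D (g : Gr R x w L) (p : ℕ) (μ : ℤ) (c : cechC A x L p) :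
    cechD A x L p ((g.C p).pr μ c) = (g.C (p + 1)).pr μ (cechD A x L p c) := by
  funext T
  change _ = (g.loc T.1).pr μ (cechD A x L p c T)
  rw [cechD_apply, cechD_apply, map_sum]
  refine Finset.sum_congr rfl fun j _ => ?_
  rw [Gr.sgn, ← Gr.cechMap]
  rfl

lemma Gr.Dprev (g : Gr R x w L) (p : ℕ) (μ : ℤ) (c : cechC A x L (p - 1)) :
    cechDprev A x L p ((g.C (p - 1)).pr μ c) = (g.C p).pr μ (cechDprev A x L p c) := by
  cases p with
  | zero => simp [cechDprev]
  | succ q => exact g.D q μ c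

/-- grading on cocycles -/
def Gr.Z (g : Gr R x w L) (i : ℕ) : Gr R x w (Zc x L i) :=
  (g.C i).sub (Zc x L i) (fun μ c hc => by
    rw [LinearMap.mem_ker] at hc ⊢
    rw [g.D, hc, map_zero])

/-- grading on local cohomology -/
def Gr.H (g : Gr R x w L) (i : ℕ) : Gr R x w (lcMod A x L i) :=
  (g.Z i).quo _ (by
    rintro μ z ⟨b, hb⟩
    exact ⟨(g.C (i - 1)).pr μ b, by rw [g.Dprev, hb]; rfl⟩)

lemma Gr.H_mk (g : Gr R x w L) (i : ℕ) (μ : ℤ) (z : Zc x L i) :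
    (g.H i).pr μ (lcMk x L i z) = lcMk x L i ((g.Z i).pr μ z) := rfl

lemma Hg.lcMap {g : Gr R x w L} {g' : Gr R x w L'} {e : ℤ} {φ : L →ₗ[A] L'} (h : Hg g g' e φ)
    (i : ℕ) : Hg (g.H i) (g'.H i) e (lcMap x φ i) := by
  intro μ c
  obtain ⟨z, rfl⟩ := lcMk_surj x i c
  rw [g.H_mk, lcMap_mk, lcMap_mk, g'.H_mk]
  congr 1
  apply Subtype.ext
  exact h.fC i μ z.1

lemma Hg.lcDelta {g : Gr R x w L} {g' : Gr R x w L'} {g'' : Gr R x w L''} {e f : ℤ}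
    {φ : L →ₗ[A] L'} {ψ : L' →ₗ[A] L''} (hφ : Hg g g' e φ) (hψ : Hg g' g'' f ψ) (S : SES φ ψ)
    (i : ℕ) : Hg (g''.H i) (g.H (i + 1)) (-(e + f)) (lcDelta x S i) := by
  intro μ h
  apply lcDelta_eq
  obtain ⟨b, z, t, h1, h2, h3, h4⟩ := (mem_dG x i _ _).1 (lcDelta_spec x S i h)
  rw [mem_dG]
  refine ⟨(g'.C i).pr (μ - f) b, (g''.Z i).pr μ z, (g.Z (i + 1)).pr (μ - f - e) t, ?_, ?_, ?_, ?_⟩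
  · rw [hψ.fC i, sub_add_cancel, h1]; rfl
  · rw [g'.D, h2]
    have := hφ.fC (i + 1) (μ - f - e) t.1
    rw [sub_add_cancel] at this
    exact this.symm
  · rw [← h3, g''.H_mk]
  · rw [← h4, g.H_mk]; congr 3; ring

end
end CB

namespace CB
noncomputable section

variable {R : Type} [CommRing R] {A : Type} [CommRing A] [Algebra R A] {n : ℕ} {x : Fin n → A}
  {w : Fin n → ℤ}
variable {L L' L'' : Type} [AddCommGroup L] [Module A L] [AddCommGroup L'] [Module A L']
  [AddCommGroup L''] [Module A L'']

/-- a type synonym carrying the restricted structure -/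
def Rs (R A : Type) [CommRing R] [CommRing A] [Algebra R A] (L : Type) [AddCommGroup L]
    [Module A L] : Type := L

instance : AddCommGroup (Rs R A L) := inferInstanceAs (AddCommGroup L)
instance : Module R (Rs R A L) := inferInstanceAs (Module R (RestrictScalars R A L))

/-- restriction of scalars of a map -/
def rs (R : Type) [CommRing R] [Algebra R A] (φ : L →ₗ[A] L') :
    Rs R A L →ₗ[R] Rs R A L' where
  toFun := φ
  map_add' := φ.map_add
  map_smul' r m := φ.map_smul (algebraMap R A r) m

/-- the projection as an `R`-linear map -/
def Gr.pl (g : Gr R x w L) (μ : ℤ) : Rs R A L →ₗ[R] Rs R A L where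
  toFun := g.pr μ
  map_add' := (g.pr μ).map_add
  map_smul' r m := g.lin μ r m

/-- finiteness of a graded piece -/
def Gr.FG (g : Gr R x w L) (μ : ℤ) : Prop := (LinearMap.range (g.pl μ)).FG

/-- finiteness of all graded pieces, and vanishing in large degrees -/
def Gr.Fini (g : Gr R x w L) : Prop :=
  (∀ μ, g.FG μ) ∧ ∃ B : ℤ, ∀ μ, B ≤ μ → ∀ m, g.pr μ m = 0

lemma fg_le [IsNoetherianRing R] {V : Type} [AddCommGroup V] [Module R V] {P Q : Submodule R V}
    (h : P ≤ Q) (hQ : Q.FG) : P.FG := by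
  have : Module.Finite R Q := Module.Finite.iff_fg.2 hQ
  have h2 : (P.comap Q.subtype).FG := IsNoetherian.noetherian _
  have := h2.map Q.subtype
  rwa [Submodule.map_comap_subtype, inf_eq_right.2 h] at this

lemma Gr.FG.mid [IsNoetherianRing R] {g : Gr R x w L} {g' : Gr R x w L'} {g'' : Gr R x w L''}
    {e f : ℤ} {φ : L →ₗ[A] L'} {ψ : L' →ₗ[A] L''} (hφ : Hg g g' e φ) (hψ : Hg g' g'' f ψ)
    (hex : ∀ m, ψ m = 0 → ∃ l, φ l = m) (μ : ℤ) (h1 : g.FG (μ - e)) (h2 : g''.FG (μ + f)) :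
    g'.FG μ := by
  unfold Gr.FG
  apply Submodule.fg_of_fg_map_of_fg_inf_ker (rs R ψ)
  · refine fg_le ?_ h2
    rintro _ ⟨_, ⟨m, rfl⟩, rfl⟩
    exact ⟨ψ m, (hψ μ m).symm⟩
  · refine fg_le ?_ (h1.map (rs R φ))
    rintro _ ⟨⟨m, rfl⟩, hm⟩
    obtain ⟨l, hl⟩ := hex _ (LinearMap.mem_ker.1 hm)
    refine ⟨_, ⟨l, rfl⟩, ?_⟩
    refine (hφ (μ - e) l).trans ?_
    rw [sub_add_cancel, hl]
    exact g'.idem μ m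

lemma Gr.Fini.mid [IsNoetherianRing R] {g : Gr R x w L} {g' : Gr R x w L'} {g'' : Gr R x w L''}
    {e f : ℤ} {φ : L →ₗ[A] L'} {ψ : L' →ₗ[A] L''} (hφ : Hg g g' e φ) (hψ : Hg g' g'' f ψ)
    (hex : ∀ m, ψ m = 0 → ∃ l, φ l = m) (h1 : g.Fini) (h2 : g''.Fini) :
    g'.Fini := by
  refine ⟨fun μ => Gr.FG.mid hφ hψ hex μ (h1.1 _) (h2.1 _), ?_⟩
  obtain ⟨B, hB⟩ := h1.2
  obtain ⟨B', hB'⟩ := h2.2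
  refine ⟨max (B + e) (B' - f), fun μ hμ m => ?_⟩
  obtain ⟨l, hl⟩ := hex (g'.pr μ m) (by
    rw [hψ]; exact hB' _ (by have := le_max_right (B + e) (B' - f); omega) _)
  have := hφ (μ - e) l
  rw [sub_add_cancel, hl, g'.idem,
    hB _ (by have := le_max_left (B + e) (B' - f); omega), map_zero] at this
  exact this.symm

lemma Gr.fin_of_subsingleton (g : Gr R x w L) (h : ∀ m : L, m = 0) : g.Fini := by
  refine ⟨fun μ => ?_, 0, fun μ _ m => h _⟩
  have : LinearMap.range (g.pl μ) = ⊥ := by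
    rw [eq_bot_iff]; intro m _; exact h m
  unfold Gr.FG
  rw [this]
  exact Submodule.fg_bot

lemma Hg.zero (g : Gr R x w L) (g' : Gr R x w L') (e : ℤ) : Hg g g' e (0 : L →ₗ[A] L') := by
  intro μ m; simp

lemma Gr.Fini.of_surj [IsNoetherianRing R] {g : Gr R x w L} {g' : Gr R x w L'}
    {e : ℤ} {φ : L →ₗ[A] L'} (hφ : Hg g g' e φ) (h : Function.Surjective φ) (h1 : g.Fini) :
    g'.Fini :=
  Gr.Fini.mid (g'' := g) (f := 0) (ψ := 0) hφ (Hg.zero _ _ _) (fun m _ => h m) h1 h1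

lemma Gr.Fini.of_inj [IsNoetherianRing R] {g : Gr R x w L} {g' : Gr R x w L'}
    {e : ℤ} {φ : L →ₗ[A] L'} (hφ : Hg g g' e φ) (h : Function.Injective φ) (h1 : g'.Fini) :
    g.Fini :=
  Gr.Fini.mid (g := g') (e := 0) (φ := 0) (Hg.zero _ _ _) hφ
    (fun m hm => ⟨0, by rw [map_zero]; exact (h (by rw [hm, map_zero])).symm⟩) h1 h1

lemma Gr.pr_zero (g : Gr R x w L) (m : L) : ∃ E : Finset ℤ, ∀ μ, μ ∉ E → g.pr μ m = 0 := by
  obtain ⟨E, hE⟩ := g.tot m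
  refine ⟨E, fun μ hμ => ?_⟩
  have h1 := hE _ (Finset.subset_insert μ E)
  rw [Finset.sum_insert hμ, hE E subset_rfl] at h1
  simpa using h1

lemma killed_of_ideal {J : Ideal A} {s : Set A} (hJ : J = Ideal.span s)
    (h : ∀ a ∈ s, ∀ m : L, a • m = 0) (a : A) (ha : a ∈ J) (m : L) : a • m = 0 := by
  subst hJ
  have : Ideal.span s ≤ Module.annihilator A L := by
    rw [Ideal.span_le]
    intro a ha
    exact Module.mem_annihilator.2 (h a ha)
  exact Module.mem_annihilator.1 (this ha) m

/-- modules killed by all variables -/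
lemma Gr.fin_killed [IsNoetherianRing R]
    (hA : ∀ a : A, ∃ r : R, a - algebraMap R A r ∈ Ideal.span (Set.range x))
    (g : Gr R x w L) [Module.Finite A L] (h : ∀ j, ∀ m : L, x j • m = 0) : g.Fini := by
  obtain ⟨s, hs⟩ := (Module.Finite.fg_top : (⊤ : Submodule A L).FG)
  have key : ∀ m : L, m ∈ (Submodule.span R (M := Rs R A L) (s : Set L)) := by
    intro m
    have hm : m ∈ Submodule.span A (s : Set L) := by rw [hs]; trivial
    induction hm using Submodule.span_induction with
    | mem m hm => exact Submodule.subset_span hm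
    | zero => exact Submodule.zero_mem _
    | add a b _ _ ha hb => exact Submodule.add_mem _ ha hb
    | smul a m _ hm =>
      obtain ⟨r, hr⟩ := hA a
      have := killed_of_ideal (L := L) rfl (by rintro _ ⟨j, rfl⟩ m; exact h j m) _ hr m
      rw [sub_smul, sub_eq_zero] at this
      rw [this]
      exact Submodule.smul_mem _ r hm
  have htop : (⊤ : Submodule R (Rs R A L)).FG :=
    ⟨s, by rw [eq_top_iff]; intro m _; exact key m⟩
  refine ⟨fun μ => fg_le le_top htop, ?_⟩
  choose E hE using fun m => g.pr_zero m
  classical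
  obtain ⟨B, hB⟩ := (s.biUnion E).bddAbove
  refine ⟨B + 1, fun μ hμ m => ?_⟩
  have hle : Submodule.span R (M := Rs R A L) (s : Set L) ≤
      LinearMap.ker (g.pl μ) := by
    refine Submodule.span_le.2 ?_
    intro m hm
    apply hE m μ
    intro hμ'
    have := hB (Finset.mem_coe.2 (Finset.mem_biUnion.2 ⟨m, hm, hμ'⟩))
    omega
  exact hle (key m)

lemma mk_Hg (g : Gr R x w L) :
    Hg g (g.loc ∅) 0 (LocalizedModule.mkLinearMap (Submonoid.powers (∏ i ∈ ∅, x i)) L) := by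
  intro μ m
  have h : ∀ m : L, LocalizedModule.mkLinearMap (Submonoid.powers (∏ i ∈ ∅, x i)) L m =
      LocalizedModule.mk m (pw x ∅ 0) := fun m => by
    rw [LocalizedModule.mkLinearMap_apply]; congr 1; ext; simp
  have h2 : μ + ((0 : ℕ) : ℤ) * ∑ j ∈ (∅ : Finset (Fin n)), w j = μ + 0 := by simp
  rw [h, h, g.loc_mk, add_zero, h2, add_zero]

lemma fin_base [IsNoetherianRing R]
    (hA : ∀ a : A, ∃ r : R, a - algebraMap R A r ∈ Ideal.span (Set.range x))
    (g : Gr R x w L) [Module.Finite A L] (h : ∀ j, ∀ m : L, x j • m = 0) (i : ℕ) :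
    (g.H i).Fini := by
  cases i with
  | zero =>
    have h1 : g.Fini := g.fin_killed hA h
    have h2 : (g.loc ∅).Fini := Gr.Fini.of_surj (mk_Hg g) (by
      intro c
      obtain ⟨m, k, rfl⟩ := exists_mk x ∅ c
      refine ⟨m, ?_⟩
      rw [LocalizedModule.mkLinearMap_apply]; congr 1; ext; simp) h1
    have h3 : (g.C 0).Fini := Gr.Fini.of_inj (e := 0)
      (φ := LinearMap.proj (⟨∅, rfl⟩ : {S : Finset (Fin n) // S.card = 0}))
      (g' := g.loc ∅) (by intro μ m; rw [add_zero]; rfl) (by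
        intro c c' hcc
        funext T
        obtain ⟨T, hT⟩ := T
        have := Finset.card_eq_zero.1 hT
        subst this
        exact hcc) h2
    have h4 : (g.Z 0).Fini := Gr.Fini.of_inj (e := 0) (φ := (Zc x L 0).subtype) (g' := g.C 0)
      (by intro μ m; rw [add_zero]; rfl) Subtype.val_injective h3
    exact Gr.Fini.of_surj (e := 0) (φ := lcMk x L 0)
      (by intro μ m; rw [add_zero, g.H_mk]) (lcMk_surj x 0) h4
  | succ q =>
    apply Gr.fin_of_subsingleton
    intro m
    obtain ⟨z, rfl⟩ := lcMk_surj x _ m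
    have : z = 0 := by
      apply Subtype.ext
      funext T
      obtain ⟨m, k, hm⟩ := exists_mk x T.1 (z.1 T)
      rw [hm]
      change _ = (0 : cechL A x L T.1)
      have h0 : (0 : cechL A x L T.1) = LocalizedModule.mk 0 (pw x T.1 0) := by
        rw [LocalizedModule.zero_mk]
      rw [h0, mk_eq_iff]
      have hT : T.1.Nonempty := by
        rw [← Finset.card_pos, T.2]; omega
      obtain ⟨j, hj⟩ := hT
      refine ⟨1, ?_⟩
      rw [smul_zero, add_zero, pow_one, ← Finset.mul_prod_erase _ _ hj, mul_smul, h]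
    rw [this, map_zero]

lemma fin_inj [IsNoetherianRing R] (g : Gr R x w L) (k : Fin n) (hw : 0 < w k)
    (hinj : ∀ m : L, x k • m = 0 → m = 0)
    (K : Submodule A L) (hKs : K = LinearMap.range (x k • (LinearMap.id : L →ₗ[A] L)))
    (hK : ∀ μ, ∀ m ∈ K, g.pr μ m ∈ K)
    (hq : ∀ i, ((g.quo K hK).H i).Fini) (i : ℕ) : (g.H i).Fini := by
  have S : SES (x k • (LinearMap.id : L →ₗ[A] L)) K.mkQ := by
    refine ⟨?_, Submodule.mkQ_surjective _, ?_⟩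
    · rw [← LinearMap.ker_eq_bot, LinearMap.ker_eq_bot']
      intro m hm; exact hinj m hm
    · intro m
      rw [← LinearMap.mem_ker, Submodule.ker_mkQ, hKs]; rfl
  have hφ : Hg g g (w k) (x k • (LinearMap.id : L →ₗ[A] L) : L →ₗ[A] L) := by
    intro μ m; exact (g.shift μ k m).symm
  have hψ : Hg g (g.quo K hK) 0 K.mkQ := by
    intro μ m; rw [add_zero, g.quo_mk]
  have hmul := hφ.lcMap i
  -- there is a graded module mapping onto the kernel of multiplication
  have hker : ∃ (V : Type) (_ : AddCommGroup V) (_ : Module A V) (gV : Gr R x w V) (e : ℤ)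
      (f : V →ₗ[A] lcMod A x L i), Hg gV (g.H i) e f ∧ gV.Fini ∧
      ∀ h, lcMap x (x k • (LinearMap.id : L →ₗ[A] L)) i h = 0 → ∃ v, f v = h := by
    cases i with
    | zero =>
      refine ⟨_, _, _, (g.quo K hK).H 0, 0, 0, Hg.zero _ _ _, hq 0, fun h hh => ⟨0, ?_⟩⟩
      rw [map_zero, les1_zero x S h hh]
    | succ i =>
      exact ⟨_, _, _, (g.quo K hK).H i, _, lcDelta x S i, hφ.lcDelta hψ S i, hq i,
        fun h hh => les1 x S i h hh⟩
  obtain ⟨V, _, _, gV, e, f, hf, hV, hex⟩ := hker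
  obtain ⟨B, hB⟩ := hV.2
  have hv : ∀ μ, B + e ≤ μ → ∀ h, (g.H i).pr μ h = h → x k • h = 0 → h = 0 := by
    intro μ hμ h h1 h2
    obtain ⟨v, rfl⟩ := hex h (by rw [lcMap_lsmul]; exact h2)
    have := hf (μ - e) v
    rw [sub_add_cancel, hB _ (by omega), map_zero, h1] at this
    exact this.symm
  have hv2 : ∀ N : ℕ, ∀ μ, B + e ≤ μ → ∀ h, (g.H i).pr μ h = h → x k ^ N • h = 0 → h = 0 := by
    intro N
    induction N with
    | zero => intro μ _ h _ h2; simpa using h2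
    | succ N ih =>
      intro μ hμ h h1 h2
      apply hv μ hμ h h1
      apply ih (μ + w k) (by omega)
      · rw [(g.H i).shift, h1]
      · rw [← mul_smul, ← pow_succ]; exact h2
  have hvan : ∀ μ, B + e ≤ μ → ∀ h, (g.H i).pr μ h = 0 := by
    intro μ hμ h
    obtain ⟨N, hN⟩ := lc_torsion x k i ((g.H i).pr μ h)
    exact hv2 N μ hμ _ ((g.H i).idem μ h) hN
  refine ⟨?_, B + e, hvan⟩
  have : ∀ t : ℕ, ∀ μ, B + e - t ≤ μ → (g.H i).FG μ := by
    intro t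
    induction t with
    | zero =>
      intro μ hμ
      have : LinearMap.range ((g.H i).pl μ) = ⊥ := by
        rw [eq_bot_iff]; rintro _ ⟨m, rfl⟩; exact hvan μ (by simpa using hμ) m
      unfold Gr.FG
      rw [this]
      exact Submodule.fg_bot
    | succ t ih =>
      intro μ hμ
      exact Gr.FG.mid hf hmul hex μ (hV.1 _) (ih _ (by push_cast at hμ; omega))
  intro μ
  exact this (B + e - μ).toNat μ (by omega)

lemma ker_stab (g : Gr R x w L) {g' : Gr R x w L'} {e : ℤ} {φ : L →ₗ[A] L'} (h : Hg g g' e φ) :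
    ∀ μ, ∀ m ∈ LinearMap.ker φ, g.pr μ m ∈ LinearMap.ker φ := by
  intro μ m hm
  rw [LinearMap.mem_ker] at hm ⊢
  rw [h, hm, map_zero]

lemma range_stab {g : Gr R x w L} (g' : Gr R x w L') {e : ℤ} {φ : L →ₗ[A] L'} (h : Hg g g' e φ) :
    ∀ μ, ∀ m ∈ LinearMap.range φ, g'.pr μ m ∈ LinearMap.range φ := by
  rintro μ _ ⟨m, rfl⟩
  exact ⟨g.pr (μ - e) m, by rw [h, sub_add_cancel]⟩

lemma exists_tors_bound [IsNoetherianRing A] [Module.Finite A L] (a : A) :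
    ∃ N : ℕ, ∀ m : L, a ^ (N + 1) • m = 0 → a ^ N • m = 0 := by
  let f : ℕ →o Submodule A L := ⟨fun k => LinearMap.ker (a ^ k • (LinearMap.id : L →ₗ[A] L)), by
    intro k l hkl m hm
    rw [LinearMap.mem_ker] at hm ⊢
    change a ^ l • m = 0
    change a ^ k • m = 0 at hm
    rw [← Nat.sub_add_cancel hkl, pow_add, mul_smul, hm, smul_zero]⟩
  obtain ⟨N, hN⟩ := (monotone_stabilizes_iff_noetherian.2 (inferInstance : IsNoetherian A L)) f
  refine ⟨N, fun m hm => ?_⟩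
  have h2 := hN (N + 1) (Nat.le_succ N)
  have : m ∈ f (N + 1) := hm
  rw [← h2] at this
  exact this

theorem lc_fin [IsNoetherianRing R] [IsNoetherianRing A]
    (hA : ∀ a : A, ∃ r : R, a - algebraMap R A r ∈ Ideal.span (Set.range x))
    (hw : ∀ j, 0 < w j) (t : ℕ) :
    ∀ (k : ℕ), k + t = n → ∀ (L : Type) [AddCommGroup L] [Module A L] [Module.Finite A L]
      (g : Gr R x w L), (∀ j : Fin n, j.1 < k → ∀ m : L, x j • m = 0) →
      ∀ i, (g.H i).Fini := by
  induction t with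
  | zero =>
    intro k hk L _ _ _ g hL i
    exact fin_base hA g (fun j => hL j (by have := j.2; omega)) i
  | succ t ih =>
    intro k hk L _ _ _ g hL
    have IH := ih (k + 1) (by omega)
    let κ : Fin n := ⟨k, by omega⟩
    obtain ⟨N, hN⟩ := exists_tors_bound (L := L) (x κ)
    induction N generalizing L with
    | zero =>
      have hst := range_stab (g := g) g (e := w κ) (φ := x κ • (LinearMap.id : L →ₗ[A] L))
        (by intro μ m; exact (g.shift μ κ m).symm)
      refine fin_inj g κ (hw κ) (fun m hm => by simpa using hN m (by simpa using hm)) _ rfl hst ?_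
      apply IH
      intro j hj m
      obtain ⟨m, rfl⟩ := Submodule.mkQ_surjective _ m
      rw [← map_smul]
      by_cases hjk : j.1 < k
      · rw [hL j hjk, map_zero]
      · have : j = κ := Fin.ext (by simp [κ]; omega)
        subst this
        exact (Submodule.Quotient.mk_eq_zero _).2 ⟨m, rfl⟩
    | succ N ihN =>
      intro i
      have hH : Hg g g (w κ) (x κ • (LinearMap.id : L →ₗ[A] L) : L →ₗ[A] L) := by
        intro μ m; exact (g.shift μ κ m).symm
      let φ := (x κ • (LinearMap.id : L →ₗ[A] L))
      let g1 := g.sub (LinearMap.ker φ) (ker_stab g hH)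
      let g2 := g.sub (LinearMap.range φ) (range_stab g hH)
      have hφ : Hg g1 g 0 (LinearMap.ker φ).subtype := by
        intro μ m; rw [add_zero]; rfl
      have hψ : Hg g g2 (w κ) φ.rangeRestrict := by
        intro μ m; apply Subtype.ext; exact hH μ m
      have S : SES (LinearMap.ker φ).subtype φ.rangeRestrict := by
        refine ⟨Subtype.val_injective, LinearMap.surjective_rangeRestrict φ, ?_⟩
        intro m
        rw [← LinearMap.mem_ker, LinearMap.ker_rangeRestrict]
        simp
      refine Gr.Fini.mid (hφ.lcMap i) (hψ.lcMap i) (les2 x S i) ?_ ?_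
      · apply IH
        rintro j hj ⟨m, hm⟩
        apply Subtype.ext
        by_cases hjk : j.1 < k
        · exact hL j hjk m
        · have : j = κ := Fin.ext (by simp [κ]; omega)
          subst this
          exact hm
      · apply ihN
        · rintro j hj ⟨m, hm⟩
          apply Subtype.ext
          exact hL j hj m
        · rintro ⟨_, m, rfl⟩ hm
          apply Subtype.ext
          have h1 := hN m (by
            have := congrArg Subtype.val hm
            rw [pow_succ, mul_smul]
            exact this)
          rw [pow_succ, mul_smul] at h1
          exact h1

end
end CB

namespace CB
noncomputable section

variable {A : Type} [CommRing A] {n : ℕ} (x : Fin n → A)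
variable {L L' L'' : Type} [AddCommGroup L] [Module A L] [AddCommGroup L'] [Module A L']
  [AddCommGroup L''] [Module A L'']

/-- vanishing of local cohomology -/
def van (L : Type) [AddCommGroup L] [Module A L] (i : ℕ) : Prop := ∀ h : lcMod A x L i, h = 0

variable {x}

lemma van.mid {φ : L →ₗ[A] L'} {ψ : L' →ₗ[A] L''} (S : SES φ ψ) {i : ℕ} (h1 : van x L i)
    (h2 : van x L'' i) : van x L' i := by
  intro h
  obtain ⟨u, rfl⟩ := les2 x S i h (h2 _)
  rw [h1 u, map_zero]

lemma van.quo {φ : L →ₗ[A] L'} {ψ : L' →ₗ[A] L''} (S : SES φ ψ) {i : ℕ} (h1 : van x L' i)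
    (h2 : van x L (i + 1)) : van x L'' i := by
  intro h
  obtain ⟨u, rfl⟩ := les3 x S i h (h2 _)
  rw [h1 u, map_zero]

lemma van.of_equiv (e : L ≃ₗ[A] L') {i : ℕ} (h1 : van x L i) : van x L' i := by
  intro h
  have : lcMap x e.toLinearMap i (lcMap x e.symm.toLinearMap i h) = h := by
    rw [← lcMap_comp]; simp [lcMap_id]
  rw [← this, h1 (lcMap x e.symm.toLinearMap i h), map_zero]

lemma van.of_subsingleton [Subsingleton L] (i : ℕ) : van x L i := by
  intro h
  have : (LinearMap.id : L →ₗ[A] L) = (0 : A) • LinearMap.id := Subsingleton.elim _ _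
  rw [← lcMap_id x i h, this, lcMap_lsmul, zero_smul]

lemma ses_ker_range (φ : L →ₗ[A] L') : SES (LinearMap.ker φ).subtype φ.rangeRestrict := by
  refine ⟨Subtype.val_injective, LinearMap.surjective_rangeRestrict φ, ?_⟩
  intro m
  rw [← LinearMap.mem_ker, LinearMap.ker_rangeRestrict]
  simp

lemma ses_sub_quo (K : Submodule A L) : SES K.subtype K.mkQ := by
  refine ⟨Subtype.val_injective, Submodule.mkQ_surjective _, ?_⟩
  intro m
  rw [← LinearMap.mem_ker, Submodule.ker_mkQ]
  simp

/-- killed by an ideal -/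
def Kil (J : Ideal A) (L : Type) [AddCommGroup L] [Module A L] : Prop :=
  ∀ a ∈ J, ∀ m : L, a • m = 0

lemma Kil.of_inj {J : Ideal A} (f : L →ₗ[A] L') (hf : Function.Injective f) (h : Kil J L') :
    Kil J L := by
  intro a ha m
  apply hf
  rw [map_smul, h a ha, map_zero]

lemma Kil.of_surj {J : Ideal A} (f : L →ₗ[A] L') (hf : Function.Surjective f) (h : Kil J L) :
    Kil J L' := by
  intro a ha m
  obtain ⟨m, rfl⟩ := hf m
  rw [← map_smul, h a ha, map_zero]

lemma support_step [IsNoetherianRing A] {M' : Type} [AddCommGroup M'] [Module A M']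
    [Module.Finite A M'] (J0 : Ideal A) (hM : Kil J0 M')
    (hP : ∀ P : Ideal A, P.IsPrime → J0 ≤ P → ∃ φ : M' →ₗ[A] A ⧸ P, φ ≠ 0)
    (j : ℕ) (hv : van x M' j)
    (ih : ∀ (L : Type) [AddCommGroup L] [Module A L] [Module.Finite A L], Kil J0 L →
      van x L (j + 1)) (J : Ideal A) :
    J0 ≤ J → ∀ (L : Type) [AddCommGroup L] [Module A L] [Module.Finite A L], Kil J L →
      van x L j := by
  induction J using IsNoetherian.induction with
  | hgt J IH =>
    intro hJ L _ _ hfin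
    refine IsNoetherianRing.induction_on_isQuotientEquivQuotientPrime A hfin
      (motive := fun L _ _ _ => Kil J L → van x L j) ?_ ?_ ?_
    · intro L _ _ _ _ _
      exact van.of_subsingleton j
    · intro L _ _ _ p e hk
      refine van.of_equiv e.symm ?_
      have hp := p.2
      have hk' : Kil J (A ⧸ p.1) := Kil.of_surj e.toLinearMap e.surjective hk
      have hle : J ≤ p.1 := by
        intro a ha
        have := hk' a ha (Ideal.Quotient.mk p.1 1)
        rw [← Ideal.Quotient.eq_zero_iff_mem]
        simpa [Algebra.smul_def] using this
      have hself : Kil p.1 (A ⧸ p.1) := by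
        intro a ha m
        rw [Algebra.smul_def, Ideal.Quotient.algebraMap_eq, Ideal.Quotient.eq_zero_iff_mem.2 ha,
          zero_mul]
      rcases hle.lt_or_eq with hlt | heq
      · exact IH _ hlt (hJ.trans hle) _ hself
      · obtain ⟨φ, hφ⟩ := hP p.1 hp (hJ.trans hle)
        have h1 : van x (LinearMap.range φ) j :=
          van.quo (ses_ker_range φ) hv (ih _ (Kil.of_inj (LinearMap.ker φ).subtype
            Subtype.val_injective hM))
        obtain ⟨m, hm⟩ : ∃ m, φ m ≠ 0 := by
          by_contra hcon
          push Not at hcon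
          exact hφ (LinearMap.ext hcon)
        obtain ⟨a, ha⟩ := Ideal.Quotient.mk_surjective (φ m)
        have hlt : J < J ⊔ Ideal.span {a} := by
          refine lt_of_le_of_ne le_sup_left ?_
          intro h
          apply hm
          rw [← ha, Ideal.Quotient.eq_zero_iff_mem, ← heq, h]
          exact Ideal.mem_sup_right (Ideal.mem_span_singleton_self a)
        refine van.mid (ses_sub_quo (LinearMap.range φ)) h1 ?_
        refine IH _ hlt (hJ.trans hlt.le) _ ?_
        intro b hb q
        obtain ⟨q, rfl⟩ := Submodule.mkQ_surjective _ q
        obtain ⟨q, rfl⟩ := Ideal.Quotient.mk_surjective q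
        obtain ⟨c, hc, t, ht, rfl⟩ := Submodule.mem_sup.1 hb
        obtain ⟨u, rfl⟩ := Ideal.mem_span_singleton'.1 ht
        rw [← map_smul]
        refine (Submodule.Quotient.mk_eq_zero _).2 ?_
        refine ⟨(u * q) • m, ?_⟩
        rw [add_smul, hself c (heq ▸ hc), map_smul, ← ha, zero_add, Algebra.smul_def,
          Algebra.smul_def, Ideal.Quotient.algebraMap_eq, ← map_mul, ← map_mul]
        congr 1; ring
    · intro L₁ _ _ _ L₂ _ _ _ L₃ _ _ _ f g hf hg hfg h1 h3 hk
      exact van.mid ⟨hf, hg, hfg⟩ (h1 (Kil.of_inj f hf hk)) (h3 (Kil.of_surj g hg hk))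

theorem support_thm [IsNoetherianRing A] {M' : Type} [AddCommGroup M'] [Module A M']
    [Module.Finite A M'] (J0 : Ideal A) (hM : Kil J0 M')
    (hP : ∀ P : Ideal A, P.IsPrime → J0 ≤ P → ∃ φ : M' →ₗ[A] A ⧸ P, φ ≠ 0)
    (d : ℕ) (hv : ∀ j, d < j → van x M' j) (j : ℕ) (hj : d < j)
    (L : Type) [AddCommGroup L] [Module A L] [Module.Finite A L] (hL : Kil J0 L) :
    van x L j := by
  have : ∀ t j : ℕ, d < j → n < j + t → ∀ (L : Type) [AddCommGroup L] [Module A L]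
      [Module.Finite A L], Kil J0 L → van x L j := by
    intro t
    induction t with
    | zero => intro j _ hn L _ _ _ _ h; exact lc_vanish_of_gt x j hn h
    | succ t ih =>
      intro j hj hn
      exact support_step J0 hM hP j (hv j hj) (ih (j + 1) (by omega) (by omega)) J0 le_rfl
  exact this (n + 1) j hj (by omega) L hL

lemma exists_hom_ne_zero [IsNoetherianRing A] [Module.Finite A L] (P : Ideal A) [hP : P.IsPrime]
    (hann : Module.annihilator A L ≤ P) : ∃ φ : L →ₗ[A] A ⧸ P, φ ≠ 0 := by
  let good : Set (Submodule A L) := {K | ∀ s : A, (∀ m, s • m ∈ K) → s ∈ P}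
  obtain ⟨K, hK, hmax⟩ := (wellFounded_gt : WellFounded ((· > ·) : Submodule A L → _ → Prop)).has_min
    good ⟨⊥, fun s hs => hann (Module.mem_annihilator.2 (fun m => by simpa using hs m))⟩
  obtain ⟨y, hy⟩ : ∃ y, y ∉ K := by
    by_contra hcon
    push Not at hcon
    exact hP.ne_top ((Ideal.eq_top_iff_one _).2 (hK 1 (fun m => hcon _)))
  obtain ⟨s, hs, hsP⟩ : ∃ s : A, (∀ m, s • m ∈ K ⊔ Submodule.span A {y}) ∧ s ∉ P := by
    by_contra hcon
    push Not at hcon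
    refine hmax (K ⊔ Submodule.span A {y}) hcon (lt_of_le_of_ne le_sup_left ?_)
    intro h
    apply hy
    rw [h]
    exact Submodule.mem_sup_right (Submodule.mem_span_singleton_self y)
  let u : A →ₗ[A] L ⧸ K := LinearMap.toSpanSingleton A _ (K.mkQ y)
  have hu : LinearMap.ker u ≤ P := by
    intro a ha
    have ha' : a • y ∈ K := by
      rw [← Submodule.Quotient.mk_eq_zero]; exact ha
    have : a * s ∈ P := by
      apply hK
      intro m
      obtain ⟨k, hk, t, ht, hkt⟩ := Submodule.mem_sup.1 (hs m)
      obtain ⟨c, rfl⟩ := Submodule.mem_span_singleton.1 ht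
      rw [mul_smul, ← hkt, smul_add, smul_comm a c]
      exact K.add_mem (K.smul_mem _ hk) (K.smul_mem _ ha')
    exact (hP.mem_or_mem this).resolve_right hsP
  let v : L →ₗ[A] LinearMap.range u := LinearMap.codRestrict _ (s • K.mkQ) (by
    intro m
    obtain ⟨k, hk, t, ht, hkt⟩ := Submodule.mem_sup.1 (hs m)
    obtain ⟨c, rfl⟩ := Submodule.mem_span_singleton.1 ht
    refine ⟨c, ?_⟩
    have : (s • K.mkQ) m = K.mkQ (s • m) := rfl
    rw [this, ← hkt, map_add, (Submodule.Quotient.mk_eq_zero K).2 hk |> (fun h => (h : K.mkQ k = 0)),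
      zero_add]
    rfl)
  refine ⟨(Submodule.factor hu).comp (u.quotKerEquivRange.symm.toLinearMap.comp v), ?_⟩
  intro h0
  have h1 := LinearMap.congr_fun h0 y
  have h2 : v y = u.quotKerEquivRange (Submodule.Quotient.mk s) := by
    apply Subtype.ext; rfl
  apply hsP
  rw [LinearMap.comp_apply, LinearMap.comp_apply, h2] at h1
  simp only [LinearEquiv.coe_coe, LinearEquiv.symm_apply_apply, LinearMap.zero_apply] at h1
  exact Ideal.Quotient.eq_zero_iff_mem.1 h1

variable {R : Type} [CommRing R] [Algebra R A]

lemma tensor_hom_ne_zero [IsNoetherianRing A] [IsNoetherianRing R] {M N : Type} [AddCommGroup M]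
    [Module A M] [Module R M] [IsScalarTower R A M] [Module.Finite A M] [AddCommGroup N]
    [Module R N] [Module.Finite R N] (P : Ideal A) (hP : P.IsPrime)
    (hle : Module.annihilator A M ⊔ (Module.annihilator R N).map (algebraMap R A) ≤ P) :
    ∃ φ : TensorProduct R M N →ₗ[A] A ⧸ P, φ ≠ 0 := by
  obtain ⟨φ, hφ⟩ := exists_hom_ne_zero (L := M) P (le_sup_left.trans hle)
  have hp : (P.comap (algebraMap R A)).IsPrime := Ideal.comap_isPrime _ _
  obtain ⟨ψ, hψ⟩ := exists_hom_ne_zero (L := N) (P.comap (algebraMap R A))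
    (Ideal.map_le_iff_le_comap.1 (le_sup_right.trans hle))
  let ι : (R ⧸ P.comap (algebraMap R A)) →ₗ[R] A ⧸ P :=
    Submodule.liftQ _ (Algebra.linearMap R (A ⧸ P)) (by
      intro r hr
      rw [LinearMap.mem_ker, Algebra.linearMap_apply,
        IsScalarTower.algebraMap_apply R A (A ⧸ P), Ideal.Quotient.algebraMap_eq,
        Ideal.Quotient.eq_zero_iff_mem]
      exact hr)
  have hι : ∀ q, ι q = 0 → q = 0 := by
    intro q hq
    obtain ⟨r, rfl⟩ := Ideal.Quotient.mk_surjective q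
    have h2 : ι (Ideal.Quotient.mk _ r) = Ideal.Quotient.mk P (algebraMap R A r) := rfl
    rw [h2, Ideal.Quotient.eq_zero_iff_mem] at hq
    rw [Ideal.Quotient.eq_zero_iff_mem]
    exact hq
  obtain ⟨m, hm⟩ : ∃ m, φ m ≠ 0 := by
    by_contra hcon
    push Not at hcon
    exact hφ (LinearMap.ext hcon)
  obtain ⟨c, hc⟩ : ∃ m, ψ m ≠ 0 := by
    by_contra hcon
    push Not at hcon
    exact hψ (LinearMap.ext hcon)
  let Φ : M →ₗ[A] N →ₗ[R] A ⧸ P :=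
    { toFun := fun m => (LinearMap.mulLeft R (φ m)).comp (ι.comp ψ)
      map_add' := fun a b => by ext c; simp [add_mul]
      map_smul' := fun a b => by ext c; simp }
  refine ⟨TensorProduct.AlgebraTensorModule.lift Φ, ?_⟩
  intro h0
  have h1 := LinearMap.congr_fun h0 (m ⊗ₜ[R] c)
  have h2 : φ m * ι (ψ c) = 0 := h1
  rcases mul_eq_zero.1 h2 with h | h
  · exact hm h
  · exact hc (hι _ h)

lemma finite_tensor {M N : Type} [AddCommGroup M]
    [Module A M] [Module R M] [IsScalarTower R A M] [Module.Finite A M] [AddCommGroup N]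
    [Module R N] [Module.Finite R N] : Module.Finite A (TensorProduct R M N) :=
  Module.Finite.equiv (TensorProduct.AlgebraTensorModule.cancelBaseChange R A A M N)

/-- vanishing for all modules supported on the support of `M ⊗ N` -/
theorem support_tensor [IsNoetherianRing A] [IsNoetherianRing R] {M N : Type} [AddCommGroup M]
    [Module A M] [Module R M] [IsScalarTower R A M] [Module.Finite A M] [AddCommGroup N]
    [Module R N] [Module.Finite R N] (d : ℕ) (hv : ∀ j, d < j → van x (TensorProduct R M N) j)
    (j : ℕ) (hj : d < j) (L : Type) [AddCommGroup L] [Module A L] [Module.Finite A L]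
    (hL : Kil (Module.annihilator A M) L)
    (hL' : ∀ r ∈ Module.annihilator R N, ∀ m : L, algebraMap R A r • m = 0) :
    van x L j := by
  have main : ∀ (L : Type) [AddCommGroup L] [Module A L]
      (_ : Kil (Module.annihilator A M) L)
      (_ : ∀ r ∈ Module.annihilator R N, ∀ m : L, algebraMap R A r • m = 0),
      Kil (Module.annihilator A M ⊔ (Module.annihilator R N).map (algebraMap R A)) L := by
    intro L _ _ h1 h2
    have : Module.annihilator A M ⊔ (Module.annihilator R N).map (algebraMap R A) ≤
        Module.annihilator A L := by
      refine sup_le ?_ ?_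
      · intro a ha; exact Module.mem_annihilator.2 (h1 a ha)
      · rw [Ideal.map_le_iff_le_comap]
        intro r hr
        exact Module.mem_annihilator.2 (h2 r hr)
    intro a ha
    exact Module.mem_annihilator.1 (this ha)
  have : Module.Finite A (TensorProduct R M N) := finite_tensor
  refine support_thm _ (main (TensorProduct R M N) ?_ ?_)
    (fun P hP hle => tensor_hom_ne_zero P hP hle) d hv j hj L (main L hL hL')
  · intro a ha t
    induction t with
    | zero => rw [smul_zero]
    | add t t' h h' => rw [smul_add, h, h', add_zero]
    | tmul m c => rw [TensorProduct.smul_tmul', Module.mem_annihilator.1 ha, TensorProduct.zero_tmul]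
  · intro r hr t
    induction t with
    | zero => rw [smul_zero]
    | add t t' h h' => rw [smul_add, h, h', add_zero]
    | tmul m c =>
      rw [algebraMap_smul, ← TensorProduct.tmul_smul, Module.mem_annihilator.1 hr,
        TensorProduct.tmul_zero]

end
end CB

namespace CB
noncomputable section

variable {R : Type} [CommRing R] {A : Type} [CommRing A] [Algebra R A] {n : ℕ} {x : Fin n → A}
  {w : Fin n → ℤ}
variable {L L' L'' : Type} [AddCommGroup L] [Module A L] [AddCommGroup L'] [Module A L']
  [AddCommGroup L''] [Module A L'']

/-- every element is killed by some `1 + a`, `a ∈ I` -/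
def GoodM (I : Ideal R) (A : Type) [CommRing A] [Algebra R A] (V : Type) [AddCommGroup V]
    [Module A V] : Prop :=
  ∀ h : V, ∃ a ∈ I, (1 + algebraMap R A a) • h = 0

lemma nak (I : Ideal R) (g : Gr R x w L) (hfg : ∀ μ, g.FG μ)
    (hsum : ∀ h : L, ∃ (r : ℕ) (a : Fin r → R) (l : Fin r → L), ∃ b ∈ I, (∀ k, a k ∈ I) ∧
      (1 + algebraMap R A b) • h = ∑ k, algebraMap R A (a k) • l k) : GoodM I A L := by
  have h3 : ∀ c ∈ I, ∀ m : L, (show Rs R A L from algebraMap R A c • m) ∈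
      (I • ⊤ : Submodule R (Rs R A L)) := by
    intro c hc m
    exact Submodule.smul_mem_smul (N := (⊤ : Submodule R (Rs R A L))) hc
      (Submodule.mem_top (x := (show Rs R A L from m)))
  have aux : ∀ h : L, ∃ (r : ℕ) (a : Fin r → R) (l : Fin r → L), ∃ b ∈ I, (∀ k, a k ∈ I) ∧
      ∑ k, algebraMap R A (a k) • l k - algebraMap R A b • h = h := by
    intro h
    obtain ⟨r, a, l, b, hb, haI, h1⟩ := hsum h
    refine ⟨r, a, l, b, hb, haI, ?_⟩
    rw [← h1, add_smul, one_smul]; abel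
  have htop : (⊤ : Submodule R (Rs R A L)) ≤ I • ⊤ := by
    rintro h -
    obtain ⟨r, a, l, b, hb, haI, h2⟩ := aux h
    have h4 := Submodule.sub_mem _ (Submodule.sum_mem (t := Finset.univ) _
      fun k _ => h3 _ (haI k) (l k)) (h3 b hb h)
    have h5 := congrArg (fun y : Rs R A L => y ∈ (I • ⊤ : Submodule R (Rs R A L))) h2
    exact h5.mp h4
  have h1 : ∀ μ, ∃ r : R, r - 1 ∈ I ∧ ∀ m ∈ LinearMap.range (g.pl μ), r • m = 0 := by
    intro μ
    apply Submodule.exists_sub_one_mem_and_smul_eq_zero_of_fg_of_le_smul I _ (hfg μ)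
    rw [LinearMap.range_eq_map, ← Submodule.map_smul'']
    exact Submodule.map_mono htop
  choose r hr1 hr2 using h1
  intro h
  obtain ⟨E, hE⟩ := g.tot h
  refine ⟨∏ μ ∈ E, r μ - 1, ?_, ?_⟩
  · rw [← Ideal.Quotient.eq_zero_iff_mem, map_sub, map_prod, map_one, sub_eq_zero]
    apply Finset.prod_eq_one
    intro μ _
    have := hr1 μ
    rwa [← Ideal.Quotient.eq_zero_iff_mem, map_sub, map_one, sub_eq_zero] at this
  · have e1 : (1 + algebraMap R A (∏ μ ∈ E, r μ - 1)) = algebraMap R A (∏ μ ∈ E, r μ) := by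
      rw [map_sub, map_one]; ring
    rw [e1]
    conv_lhs => rw [← hE E subset_rfl]
    rw [Finset.smul_sum]
    apply Finset.sum_eq_zero
    intro μ hμ
    rw [← Finset.prod_erase_mul _ _ hμ, map_mul, mul_smul]
    have : algebraMap R A (r μ) • g.pr μ h = 0 := hr2 μ _ ⟨h, rfl⟩
    rw [this, smul_zero]

/-- the map `l ↦ ∑ a_k l_k` -/
def sumMap (L : Type) [AddCommGroup L] [Module A L] {r : ℕ} (a : Fin r → R) :
    (Fin r → L) →ₗ[A] L :=
  ∑ k, algebraMap R A (a k) • LinearMap.proj k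

lemma sumMap_apply {r : ℕ} (a : Fin r → R) (l : Fin r → L) :
    sumMap (A := A) L a l = ∑ k, algebraMap R A (a k) • l k := by
  simp [sumMap]

theorem good_thm [IsNoetherianRing R] [IsNoetherianRing A]
    (hA : ∀ a : A, ∃ r : R, a - algebraMap R A r ∈ Ideal.span (Set.range x))
    (hw : ∀ j, 0 < w j) (I : Ideal R) (J : Ideal A) (d : ℕ)
    (hsup : ∀ j, d < j → ∀ (L : Type) [AddCommGroup L] [Module A L] [Module.Finite A L],
      Kil J L → (∀ r ∈ I, ∀ m : L, algebraMap R A r • m = 0) → van x L j)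
    (j : ℕ) (hj : d < j) (L : Type) [AddCommGroup L] [Module A L] [Module.Finite A L]
    (hL : Kil J L) (g : Gr R x w L) : GoodM I A (lcMod A x L j) := by
  obtain ⟨r, a, ha⟩ := Submodule.fg_iff_exists_fin_generating_family.1
    ((isNoetherianRing_iff_ideal_fg R).1 inferInstance I)
  have haI : ∀ k, a k ∈ I := fun k => ha ▸ Submodule.subset_span ⟨k, rfl⟩
  have : ∀ t j : ℕ, d < j → n < j + t → ∀ (L : Type) [AddCommGroup L] [Module A L]
      [Module.Finite A L], Kil J L → Gr R x w L → GoodM I A (lcMod A x L j) := by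
    intro t
    induction t with
    | zero =>
      intro j _ hn L _ _ _ _ _ h
      refine ⟨0, I.zero_mem, ?_⟩
      rw [lc_vanish_of_gt x j hn h, smul_zero]
    | succ t ih =>
      intro j hj hn L _ _ _ hL g
      have hH : Hg (Gr.pi fun _ : Fin r => g) g 0 (sumMap (A := A) L a) := by
        intro μ l
        rw [sumMap_apply, sumMap_apply, add_zero, map_sum]
        exact Finset.sum_congr rfl fun k _ => (g.lin μ (a k) (l k)).symm
      let K := LinearMap.ker (sumMap (A := A) L a)
      let U := LinearMap.range (sumMap (A := A) L a)
      have hLr : Kil J (Fin r → L) := fun c hc l => funext fun k => hL c hc (l k)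
      have hK : GoodM I A (lcMod A x K (j + 1)) :=
        ih (j + 1) (by omega) (by omega) K (Kil.of_inj K.subtype Subtype.val_injective hLr)
          ((Gr.pi fun _ => g).sub K (ker_stab _ hH))
      have hQ : van x (L ⧸ U) j := by
        refine hsup j hj _ (Kil.of_surj U.mkQ (Submodule.mkQ_surjective _) hL) ?_
        intro c hc m
        obtain ⟨m, rfl⟩ := Submodule.mkQ_surjective _ m
        rw [← map_smul]
        refine (Submodule.Quotient.mk_eq_zero _).2 ?_
        have hle : I ≤ Ideal.comap (algebraMap R A)
            (Submodule.comap (LinearMap.toSpanSingleton A L m) U) := by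
          rw [← ha, Submodule.span_le]
          rintro _ ⟨k, rfl⟩
          refine ⟨Pi.single k m, ?_⟩
          rw [sumMap_apply, Finset.sum_eq_single k]
          · simp
          · intro b _ hb; simp [hb]
          · simp
        exact hle hc
      apply nak I (g.H j) (lc_fin hA hw n 0 (by omega) L g (by intro j hj; omega) j).1
      intro h
      obtain ⟨u, hu⟩ := les2 x (ses_sub_quo U) j h (hQ _)
      obtain ⟨b, hb, hbk⟩ := hK (lcDelta x (ses_ker_range (sumMap (A := A) L a)) j u)
      rw [← map_smul] at hbk
      obtain ⟨v, hv⟩ := les3 x (ses_ker_range (sumMap (A := A) L a)) j _ hbk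
      have h1 : (1 + algebraMap R A b) • h =
          ∑ k, algebraMap R A (a k) • lcMap x (LinearMap.proj k : (Fin r → L) →ₗ[A] L) j v := by
        have e : U.subtype.comp (sumMap (A := A) L a).rangeRestrict = sumMap (A := A) L a := by
          ext; rfl
        have : lcMap x (sumMap (A := A) L a) j v = (1 + algebraMap R A b) • h := by
          rw [← hu, ← map_smul]
          rw [← hv, ← lcMap_comp, e]
        rw [← this, sumMap, lcMap_sum, LinearMap.sum_apply]
        refine Finset.sum_congr rfl fun k _ => ?_
        rw [lcMap_smul, LinearMap.smul_apply]
      exact ⟨r, a, _, b, hb, haI, h1⟩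
  exact this (n + 1) j hj (by omega) L hL g

end
end CB

namespace CB
noncomputable section
open scoped TensorProduct

variable {R : Type} [CommRing R] {A : Type} [CommRing A] [Algebra R A] {n : ℕ} {x : Fin n → A}
  {w : Fin n → ℤ}
variable {L L' L'' : Type} [AddCommGroup L] [Module A L] [AddCommGroup L'] [Module A L']
  [AddCommGroup L''] [Module A L'']
variable {M : Type} [AddCommGroup M] [Module R M] [Module A M] [IsScalarTower R A M]
variable {E E' E'' : Type} [AddCommGroup E] [Module R E] [AddCommGroup E'] [Module R E']
  [AddCommGroup E''] [Module R E'']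

/-- lifting through maps with large range -/
lemma free_lift [Module.Free R E] (f : E →ₗ[R] E'') (δ : E' →ₗ[R] E'')
    (h : ∀ e, f e ∈ LinearMap.range δ) : ∃ s : E →ₗ[R] E', ∀ e, δ (s e) = f e := by
  obtain ⟨s, hs⟩ := Module.projective_lifting_property δ.rangeRestrict
    (f.codRestrict (LinearMap.range δ) h) (LinearMap.surjective_rangeRestrict δ)
  exact ⟨s, fun e => congrArg Subtype.val (LinearMap.congr_fun hs e)⟩

section homotopy
variable {N : Type} [AddCommGroup N] [Module R N]
variable {F : ℕ → Type} [∀ q, AddCommGroup (F q)] [∀ q, Module R (F q)]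
    [∀ q, Module.Free R (F q)]
    {dF : ∀ q : ℕ, F (q + 1) →ₗ[R] F q} {ε : F 0 →ₗ[R] N}

lemma htpy0 (hexact0 : Function.Exact (dF 0) ε) (a : R) (ha : a ∈ Module.annihilator R N) :
    ∃ s : F 0 →ₗ[R] F 1, ∀ f, dF 0 (s f) = a • f := by
  refine free_lift (a • LinearMap.id : F 0 →ₗ[R] F 0) (dF 0) ?_
  intro f
  apply (hexact0 _).1
  simp [Module.mem_annihilator.1 ha]

lemma htpy (hexact : ∀ q : ℕ, Function.Exact (dF (q + 1)) (dF q))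
    (hexact0 : Function.Exact (dF 0) ε) (a : R) (ha : a ∈ Module.annihilator R N) (q : ℕ) :
    ∃ (s : F q →ₗ[R] F (q + 1)) (t : F (q + 1) →ₗ[R] F (q + 2)),
      ∀ f, dF (q + 1) (t f) + s (dF q f) = a • f := by
  induction q with
  | zero =>
    obtain ⟨s, hs⟩ := htpy0 hexact0 a ha
    obtain ⟨t, ht⟩ := free_lift (a • LinearMap.id - s.comp (dF 0) : F 1 →ₗ[R] F 1) (dF 1) (by
      intro f
      apply (hexact 0 _).1
      simp [hs])
    exact ⟨s, t, fun f => by rw [ht]; simp⟩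
  | succ q ih =>
    obtain ⟨s, t, hst⟩ := ih
    obtain ⟨t', ht⟩ := free_lift (a • LinearMap.id - t.comp (dF (q + 1)) :
        F (q + 2) →ₗ[R] F (q + 2)) (dF (q + 2)) (by
      intro f
      apply (hexact (q + 1) _).1
      have := hst (dF (q + 1) f)
      rw [(hexact q _).2 ⟨f, rfl⟩, map_zero, add_zero] at this
      simp [this])
    exact ⟨t, t', fun f => by rw [ht]; simp⟩

end homotopy

variable (A M) in
/-- `id ⊗ φ` -/
def mT (φ : E →ₗ[R] E') : (M ⊗[R] E) →ₗ[A] (M ⊗[R] E') :=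
  TensorProduct.AlgebraTensorModule.map (LinearMap.id : M →ₗ[A] M) φ

@[simp] lemma mT_tmul (φ : E →ₗ[R] E') (m : M) (e : E) :
    mT A M φ (m ⊗ₜ e) = m ⊗ₜ φ e := rfl

lemma mT_comp (φ : E →ₗ[R] E') (ψ : E' →ₗ[R] E'') (y : M ⊗[R] E) :
    mT A M ψ (mT A M φ y) = mT A M (ψ.comp φ) y := by
  induction y with
  | zero => simp
  | tmul m e => simp
  | add y z hy hz => simp only [map_add, hy, hz]

lemma mT_add (φ ψ : E →ₗ[R] E') (y : M ⊗[R] E) :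
    mT A M (φ + ψ) y = mT A M φ y + mT A M ψ y := by
  induction y with
  | zero => simp
  | tmul m e => simp [TensorProduct.tmul_add]
  | add y z hy hz => simp only [map_add, hy, hz]; abel

lemma mT_smul_id (a : R) (y : M ⊗[R] E) :
    mT A M (a • LinearMap.id : E →ₗ[R] E) y = algebraMap R A a • y := by
  induction y with
  | zero => simp
  | tmul m e => simp [TensorProduct.smul_tmul']
  | add y z hy hz => simp only [map_add, hy, hz, smul_add]

lemma mT_eq_lTensor (φ : E →ₗ[R] E') (y : M ⊗[R] E) :
    mT A M φ y = LinearMap.lTensor M φ y := by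
  induction y with
  | zero => simp
  | tmul m e => simp
  | add y z hy hz => simp only [map_add, hy, hz]

lemma tensor_ann (a : R) (ha : a ∈ Module.annihilator R E) (y : M ⊗[R] E) :
    algebraMap R A a • y = 0 := by
  rw [← mT_smul_id]
  have : (a • LinearMap.id : E →ₗ[R] E) = 0 := by
    ext e; simp [Module.mem_annihilator.1 ha]
  rw [this]
  induction y with
  | zero => simp
  | tmul m e => simp
  | add y z hy hz => simp only [map_add, hy, hz, add_zero]

lemma Kil.tensor : Kil (Module.annihilator A M) (M ⊗[R] E) := by
  intro a ha y
  induction y with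
  | zero => simp
  | tmul m e => simp [TensorProduct.smul_tmul', Module.mem_annihilator.1 ha]
  | add y z hy hz => simp only [smul_add, hy, hz, add_zero]

/-- linear projections -/
def Gr.prR (g : Gr R x w M) (μ : ℤ) : M →ₗ[R] M where
  toFun := g.pr μ
  map_add' := map_add _
  map_smul' r m := by
    rw [← algebraMap_smul A r m, g.lin, algebraMap_smul, RingHom.id_apply]

lemma Gr.prR_apply (g : Gr R x w M) (μ : ℤ) (m : M) : g.prR μ m = g.pr μ m := rfl

/-- grading on a tensor product -/
def Gr.tensor (g : Gr R x w M) (E : Type) [AddCommGroup E] [Module R E] :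
    Gr R x w (M ⊗[R] E) where
  pr μ := (LinearMap.rTensor E (g.prR μ)).toAddMonoidHom
  lin μ r y := by
    rw [algebraMap_smul, algebraMap_smul]
    exact (LinearMap.rTensor E (g.prR μ)).map_smul r y
  idem μ y := by
    induction y with
    | zero => simp
    | tmul m e => simp [Gr.prR_apply, g.idem]
    | add y z hy hz => simp only [map_add, hy, hz]
  shift μ j y := by
    induction y with
    | zero => simp
    | tmul m e => simp [TensorProduct.smul_tmul', Gr.prR_apply, g.shift]
    | add y z hy hz => simp only [map_add, smul_add, hy, hz]
  tot y := by
    induction y with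
    | zero => exact ⟨∅, by simp⟩
    | tmul m e =>
      obtain ⟨S, hS⟩ := g.tot m
      refine ⟨S, fun S' h => ?_⟩
      conv_rhs => rw [← hS S' h]
      rw [TensorProduct.sum_tmul]
      rfl
    | add y z hy hz =>
      obtain ⟨S, hS⟩ := hy
      obtain ⟨T, hT⟩ := hz
      refine ⟨S ∪ T, fun S' h => ?_⟩
      simp only [map_add, Finset.sum_add_distrib]
      rw [hS S' (Finset.union_subset_left h), hT S' (Finset.union_subset_right h)]

lemma Gr.tensor_tmul (g : Gr R x w M) (μ) (m : M) (e : E) :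
    (g.tensor E).pr μ (m ⊗ₜ e) = g.pr μ m ⊗ₜ e := rfl

lemma Hg.mT (g : Gr R x w M) (φ : E →ₗ[R] E') :
    Hg (g.tensor E) (g.tensor E') 0 (CB.mT A M φ) := by
  intro μ y
  rw [add_zero]
  induction y with
  | zero => simp
  | tmul m e => simp [Gr.tensor_tmul]
  | add y z hy hz => simp only [map_add, hy, hz]

/-! good modules -/

lemma GoodM.tensor {I : Ideal R} (h : GoodM I A M) : GoodM I A (M ⊗[R] E) := by
  intro y
  induction y with
  | zero => exact ⟨0, I.zero_mem, by simp⟩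
  | tmul m e =>
    obtain ⟨a, ha, h1⟩ := h m
    exact ⟨a, ha, by rw [TensorProduct.smul_tmul', h1, TensorProduct.zero_tmul]⟩
  | add y z hy hz =>
    obtain ⟨a, ha, h1⟩ := hy
    obtain ⟨b, hb, h2⟩ := hz
    refine ⟨a + b + a * b, I.add_mem (I.add_mem ha hb) (I.mul_mem_right _ ha), ?_⟩
    have e : 1 + algebraMap R A (a + b + a * b) =
      (1 + algebraMap R A a) * (1 + algebraMap R A b) := by
        rw [map_add, map_add, map_mul]; ring
    rw [e, smul_add, mul_smul, mul_smul, h2, smul_zero, add_zero, smul_comm, h1, smul_zero]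

lemma good_zero {I : Ideal R} (h : GoodM I A L) (u : L)
    (hu : ∀ a ∈ I, algebraMap R A a • u = 0) : u = 0 := by
  obtain ⟨a, ha, h1⟩ := h u
  rwa [add_smul, one_smul, hu a ha, add_zero] at h1

lemma lc_kill (a : A) (h : ∀ m : L, a • m = 0) (i : ℕ) (u : lcMod A x L i) : a • u = 0 := by
  rw [← lcMap_lsmul]
  have : (a • LinearMap.id : L →ₗ[A] L) = (0 : A) • LinearMap.id := by
    ext m; simp [h]
  rw [this, lcMap_lsmul, zero_smul]

/-! Tor -/
section tor
variable {N : Type} [AddCommGroup N] [Module R N]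
variable {F : ℕ → Type} [∀ q, AddCommGroup (F q)] [∀ q, Module R (F q)]
    {dF : ∀ q : ℕ, F (q + 1) →ₗ[R] F q} {ε : F 0 →ₗ[R] N}

variable (R A M F dF) in
/-- class of a cycle -/
def torMk (q : ℕ) : LinearMap.ker (torDout R A M F dF q) →ₗ[A] torMod R A M F dF q :=
  Submodule.mkQ (Submodule.comap (LinearMap.ker (torDout R A M F dF q)).subtype
      (LinearMap.range (torD R A M F dF q)))

lemma torMk_surj (q : ℕ) : Function.Surjective (torMk R A M F dF q) :=
  Submodule.mkQ_surjective _

lemma torMk_eq_zero (q : ℕ) (y) :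
    torMk R A M F dF q y = 0 ↔ ∃ b, mT A M (dF q) b = y.1 :=
  Submodule.Quotient.mk_eq_zero _

lemma tor_kill [∀ q, Module.Free R (F q)]
    (hexact : ∀ q : ℕ, Function.Exact (dF (q + 1)) (dF q))
    (hexact0 : Function.Exact (dF 0) ε) (a : R) (ha : a ∈ Module.annihilator R N) (q : ℕ)
    (y : torMod R A M F dF q) : algebraMap R A a • y = 0 := by
  obtain ⟨y, rfl⟩ := torMk_surj q y
  rw [← map_smul, torMk_eq_zero]
  obtain ⟨y, hy⟩ := y
  cases q with
  | zero =>
    obtain ⟨s, hs⟩ := htpy0 hexact0 a ha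
    refine ⟨mT A M s y, ?_⟩
    rw [mT_comp]
    have : (dF 0).comp s = a • LinearMap.id := by ext f; simp [hs]
    rw [this, mT_smul_id]; rfl
  | succ q =>
    obtain ⟨s, t, hst⟩ := htpy hexact hexact0 a ha q
    refine ⟨mT A M t y, ?_⟩
    have hy' : mT A M (dF q) y = 0 := hy
    have : (dF (q + 1)).comp t + s.comp (dF q) = a • LinearMap.id := by ext f; simp [hst]
    rw [Submodule.coe_smul, ← mT_smul_id, ← this, mT_add, ← mT_comp, ← mT_comp, hy', map_zero,
      add_zero]

lemma tor_good {I : Ideal R} (h : GoodM I A M) (q : ℕ) : GoodM I A (torMod R A M F dF q) := by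
  intro y
  obtain ⟨⟨y, hy⟩, rfl⟩ := torMk_surj q y
  obtain ⟨a, ha, h1⟩ := GoodM.tensor h y
  refine ⟨a, ha, ?_⟩
  rw [← map_smul]
  have : (1 + algebraMap R A a) • (⟨y, hy⟩ : LinearMap.ker (torDout R A M F dF q)) = 0 :=
    Subtype.ext h1
  rw [this, map_zero]

lemma tor_kil (q : ℕ) : Kil (Module.annihilator A M) (torMod R A M F dF q) :=
  Kil.of_surj (torMk R A M F dF q) (torMk_surj q)
    (Kil.of_inj (LinearMap.ker (torDout R A M F dF q)).subtype Subtype.val_injective Kil.tensor)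

lemma tor_finite [IsNoetherianRing A] [Module.Finite A M] [∀ q, Module.Finite R (F q)] (q : ℕ) :
    Module.Finite A (torMod R A M F dF q) := by
  have := finite_tensor (R := R) (A := A) (M := M) (N := F q)
  exact Module.Finite.of_surjective (torMk R A M F dF q) (torMk_surj q)

end tor
end
end CB

namespace CB
noncomputable section
open scoped TensorProduct

variable {R : Type} [CommRing R] {A : Type} [CommRing A] [Algebra R A] {n : ℕ} {x : Fin n → A}
  {w : Fin n → ℤ}
variable {M : Type} [AddCommGroup M] [Module R M] [Module A M] [IsScalarTower R A M]
variable {E E' E'' : Type} [AddCommGroup E] [Module R E] [AddCommGroup E'] [Module R E']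
  [AddCommGroup E''] [Module R E'']

/-- restricted scalars on local cohomology -/
abbrev lcR (R : Type) [CommRing R] {A : Type} [CommRing A] [Algebra R A] {n : ℕ} (x : Fin n → A)
    (L : Type) [AddCommGroup L] [Module A L] (i : ℕ) : Module R (lcMod A x L i) :=
  Module.compHom _ (algebraMap R A)

attribute [local instance] lcR

lemma lcR_smul {L : Type} [AddCommGroup L] [Module A L] (i : ℕ) (r : R) (h : lcMod A x L i) :
    r • h = algebraMap R A r • h := rfl

variable (x M E) in
/-- the natural map -/
def gam (i : ℕ) : (lcMod A x M i) ⊗[R] E →ₗ[R] lcMod A x (M ⊗[R] E) i :=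
  TensorProduct.lift (LinearMap.mk₂ R
    (fun h e => lcMap x (tmulRightS R A M E e) i h)
    (fun h h' e => map_add (lcMap x (tmulRightS R A M E e) i) h h')
    (fun r h e => by rw [lcR_smul, map_smul]; rfl)
    (fun h e e' => by
      have : tmulRightS R A M E (e + e') = tmulRightS R A M E e + tmulRightS R A M E e' := by
        ext m; exact TensorProduct.tmul_add _ _ _
      rw [this, lcMap_add]; rfl)
    (fun r h e => by
      have : tmulRightS R A M E (r • e) = algebraMap R A r • tmulRightS R A M E e := by
        ext m
        rw [LinearMap.smul_apply, algebraMap_smul]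
        exact TensorProduct.tmul_smul _ _ _
      rw [this, lcMap_smul]; rfl))

lemma gam_tmul (i : ℕ) (h : lcMod A x M i) (e : E) :
    gam x M E i (h ⊗ₜ[R] e) = lcMap x (tmulRightS R A M E e) i h := rfl

lemma gam_nat (i : ℕ) (φ : E →ₗ[R] E') (t : (lcMod A x M i) ⊗[R] E) :
    lcMap x (mT A M φ) i (gam x M E i t) = gam x M E' i (LinearMap.lTensor _ φ t) := by
  induction t with
  | zero => rw [map_zero, map_zero, map_zero, map_zero]
  | tmul h e =>
    rw [LinearMap.lTensor_tmul, gam_tmul, gam_tmul, ← lcMap_comp]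
    rfl
  | add s t hs ht =>
    rw [map_add, map_add, map_add, map_add, ← hs, ← ht]

variable (A M) in
/-- coordinate projections -/
def pC (c : E →ₗ[R] R) : M ⊗[R] E →ₗ[A] M :=
  (TensorProduct.AlgebraTensorModule.rid R A M).toLinearMap.comp (mT A M c)

lemma pC_tmul (c : E →ₗ[R] R) (m : M) (e : E) : pC A M c (m ⊗ₜ e) = algebraMap R A (c e) • m := by
  simp [pC]

lemma gam_bij [Module.Free R E] [Module.Finite R E] (i : ℕ) :
    Function.Bijective (gam (R := R) x M E i) := by
  let b := Module.Free.chooseBasis R E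
  let inv : lcMod A x (M ⊗[R] E) i → (lcMod A x M i) ⊗[R] E := fun y =>
    ∑ k, (lcMap x (pC A M (b.coord k)) i y) ⊗ₜ[R] b k
  have hadd : ∀ y z, inv (y + z) = inv y + inv z := by
    intro y z
    simp only [inv]
    rw [← Finset.sum_add_distrib]
    refine Finset.sum_congr rfl fun k _ => ?_
    rw [map_add]
    exact TensorProduct.add_tmul _ _ _
  have h0 : inv 0 = 0 := by
    have := hadd 0 0
    rw [add_zero] at this
    exact (add_eq_left.1 this.symm)
  refine Function.bijective_iff_has_inverse.2 ⟨inv, ?_, ?_⟩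
  · intro t
    induction t with
    | zero => rw [map_zero]; exact h0
    | tmul h e =>
      rw [gam_tmul]
      simp only [inv]
      have : ∀ k, (lcMap x (pC A M (b.coord k)) i (lcMap x (tmulRightS R A M E e) i h))
          ⊗ₜ[R] b k = h ⊗ₜ[R] (b.coord k e • b k) := by
        intro k
        rw [← lcMap_comp]
        have : (pC A M (b.coord k)).comp (tmulRightS R A M E e) =
            algebraMap R A (b.coord k e) • LinearMap.id := by
          ext m; exact pC_tmul _ _ _
        rw [this, lcMap_lsmul, ← TensorProduct.smul_tmul]
        rfl
      rw [Finset.sum_congr rfl fun k _ => this k, ← TensorProduct.tmul_sum]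
      congr 1
      exact b.sum_repr e
    | add s t hs ht =>
      rw [map_add]
      refine (hadd _ _).trans ?_
      rw [hs, ht]
  · intro y
    have h1 : gam x M E i (inv y) = ∑ k, (lcMap x (tmulRightS R A M E (b k)) i
        (lcMap x (pC A M (b.coord k)) i y) : lcMod A x (M ⊗[R] E) i) := by
      simp only [inv]
      rw [map_sum]
      rfl
    rw [h1]
    have h2 : ∀ k, lcMap x (tmulRightS R A M E (b k)) i (lcMap x (pC A M (b.coord k)) i y) =
      lcMap x ((tmulRightS R A M E (b k)).comp (pC A M (b.coord k))) i y :=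
      fun k => (lcMap_comp _ _ _ _ _).symm
    rw [Finset.sum_congr rfl fun k _ => h2 k, ← LinearMap.sum_apply, ← lcMap_sum]
    have h3 : ∑ k, (tmulRightS R A M E (b k)).comp (pC A M (b.coord k)) = LinearMap.id := by
      apply LinearMap.ext
      intro z
      rw [LinearMap.sum_apply]
      induction z with
      | zero => simp
      | tmul m e =>
        have : ∀ k, (tmulRightS R A M E (b k)).comp (pC A M (b.coord k)) (m ⊗ₜ e) =
            m ⊗ₜ (b.coord k e • b k) := by
          intro k
          rw [LinearMap.comp_apply, pC_tmul, algebraMap_smul, ← TensorProduct.smul_tmul]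
          rfl
        rw [Finset.sum_congr rfl fun k _ => this k, ← TensorProduct.tmul_sum]
        congr 1
        exact b.sum_repr e
      | add s t hs ht => simp only [map_add, Finset.sum_add_distrib, hs, ht]
    rw [h3, lcMap_id]

section main
variable {N : Type} [AddCommGroup N] [Module R N]
variable {F0 F1 : Type} [AddCommGroup F0] [Module R F0] [AddCommGroup F1] [Module R F1]
    {δ : F1 →ₗ[R] F0} {ε : F0 →ₗ[R] N}

lemma mT_surj (hs : Function.Surjective ε) : Function.Surjective (mT A M ε) := by
  intro y
  obtain ⟨z, hz⟩ := LinearMap.lTensor_surjective M hs y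
  exact ⟨z, (mT_eq_lTensor ε z).trans hz⟩

lemma mT_exact (he : Function.Exact δ ε) (hs : Function.Surjective ε) :
    Function.Exact (mT A M δ) (mT A M ε) := by
  intro y
  rw [mT_eq_lTensor, (lTensor_exact M he hs) y]
  simp only [Set.mem_range, mT_eq_lTensor]

lemma surj_top [IsNoetherianRing A] [Module.Finite A M] [Module.Finite R F0] (g : Gr R x w M)
    (d : ℕ) (hgood : ∀ (L : Type) [AddCommGroup L] [Module A L] [Module.Finite A L],
      Kil (Module.annihilator A M) L → Gr R x w L →
      GoodM (Module.annihilator R N) A (lcMod A x L (d + 1)))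
    (hs : Function.Surjective ε) (h : lcMod A x (M ⊗[R] N) d) :
    ∃ u, lcMap x (mT A M ε) d u = h := by
  have := finite_tensor (R := R) (A := A) (M := M) (N := F0)
  let K := LinearMap.ker (mT A M ε)
  have S : SES K.subtype (mT A M ε) := by
    refine ⟨Subtype.val_injective, mT_surj hs, ?_⟩
    intro y
    simp [K]
  apply les3 x S d h
  refine good_zero (hgood K (Kil.of_inj K.subtype Subtype.val_injective Kil.tensor)
    ((g.tensor F0).sub K (ker_stab _ (Hg.mT g ε)))) _ ?_
  intro a ha
  rw [← map_smul, lc_kill _ (tensor_ann a ha), map_zero]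

lemma mid_top [IsNoetherianRing A] [Module.Finite A M] [Module.Finite R F0] [Module.Finite R F1]
    (g : Gr R x w M)
    (d : ℕ) (hgood : ∀ (L : Type) [AddCommGroup L] [Module A L] [Module.Finite A L],
      Kil (Module.annihilator A M) L → Gr R x w L →
      GoodM (Module.annihilator R N) A (lcMod A x L (d + 1)))
    (he : Function.Exact δ ε) (hs : Function.Surjective ε)
    (hst : ∀ a ∈ Module.annihilator R N, ∃ s : F0 →ₗ[R] F1, ∀ f, δ (s f) = a • f)
    (h : lcMod A x (M ⊗[R] F0) d) (hh : lcMap x (mT A M ε) d h = 0) :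
    ∃ u, lcMap x (mT A M δ) d u = h := by
  have := finite_tensor (R := R) (A := A) (M := M) (N := F0)
  have := finite_tensor (R := R) (A := A) (M := M) (N := F1)
  let K := LinearMap.ker (mT A M ε)
  have S : SES K.subtype (mT A M ε) := by
    refine ⟨Subtype.val_injective, mT_surj hs, ?_⟩
    intro y
    simp [K]
  obtain ⟨u, rfl⟩ := les2 x S d h hh
  let D : M ⊗[R] F1 →ₗ[A] K := (mT A M δ).codRestrict K (fun y => (mT_exact he hs _).2 ⟨y, rfl⟩)
  have hD : K.subtype.comp D = mT A M δ := rfl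
  have hDs : Function.Surjective D := by
    rintro ⟨y, hy⟩
    obtain ⟨z, hz⟩ := (mT_exact (A := A) he hs _).1 hy
    exact ⟨z, Subtype.ext hz⟩
  let P := LinearMap.ker D
  have S2 : SES P.subtype D := by
    refine ⟨Subtype.val_injective, hDs, ?_⟩
    intro y
    simp [P]
  have hHD : Hg (g.tensor F1) ((g.tensor F0).sub K (ker_stab _ (Hg.mT g ε))) 0 D := by
    intro μ y
    exact Subtype.ext (Hg.mT g δ μ y)
  obtain ⟨a, ha, h1⟩ := hgood P (Kil.of_inj P.subtype Subtype.val_injective Kil.tensor)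
    ((g.tensor F1).sub P (ker_stab _ hHD)) (lcDelta x S2 d u)
  rw [← map_smul] at h1
  obtain ⟨v, hv⟩ := les3 x S2 d _ h1
  obtain ⟨s, hs'⟩ := hst a ha
  have h2 : lcMap x (mT A M δ) d v = (1 + algebraMap R A a) • lcMap x K.subtype d u := by
    rw [← map_smul, ← hv, ← lcMap_comp, hD]
  have h3 : lcMap x (mT A M δ) d (lcMap x (mT A M s) d (lcMap x K.subtype d u)) =
      algebraMap R A a • lcMap x K.subtype d u := by
    rw [← lcMap_comp x (mT A M s) (mT A M δ)]
    have : (mT A M δ).comp (mT A M s) = algebraMap R A a • LinearMap.id := by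
      apply LinearMap.ext
      intro y
      rw [LinearMap.comp_apply, mT_comp]
      have : δ.comp s = a • LinearMap.id := by ext f; simp [hs']
      rw [this, mT_smul_id]; rfl
    rw [this, lcMap_lsmul]
  refine ⟨v - lcMap x (mT A M s) d (lcMap x K.subtype d u), ?_⟩
  rw [map_sub, h2, h3, add_smul, one_smul, add_sub_cancel_right]

theorem gam_top [IsNoetherianRing A] [Module.Finite A M] [Module.Finite R F0] [Module.Finite R F1]
    [Module.Free R F0] [Module.Free R F1]
    (g : Gr R x w M)
    (d : ℕ) (hgood : ∀ (L : Type) [AddCommGroup L] [Module A L] [Module.Finite A L],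
      Kil (Module.annihilator A M) L → Gr R x w L →
      GoodM (Module.annihilator R N) A (lcMod A x L (d + 1)))
    (he : Function.Exact δ ε) (hs : Function.Surjective ε)
    (hst : ∀ a ∈ Module.annihilator R N, ∃ s : F0 →ₗ[R] F1, ∀ f, δ (s f) = a • f) :
    Function.Bijective (gam (R := R) x M N d) := by
  constructor
  · refine (injective_iff_map_eq_zero _).2 ?_
    intro t ht
    obtain ⟨t0, rfl⟩ := LinearMap.lTensor_surjective _ hs t
    rw [← gam_nat] at ht
    obtain ⟨y1, h1⟩ := mid_top g d hgood he hs hst _ ht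
    obtain ⟨t1, rfl⟩ := (gam_bij (x := x) (M := M) (E := F1) d).2 y1
    have h2 := (gam_nat d δ t1).symm.trans h1
    have h3 := (gam_bij (x := x) (M := M) (E := F0) d).1 h2
    rw [← h3]
    exact (lTensor_exact _ he hs _).2 ⟨t1, rfl⟩
  · intro y
    obtain ⟨y0, h0⟩ := surj_top g d hgood hs y
    obtain ⟨t0, rfl⟩ := (gam_bij (x := x) (M := M) (E := F0) d).2 y0
    exact ⟨_, (gam_nat d ε t0).symm.trans h0⟩

end main
end
end CB

namespace CB
noncomputable section
open scoped TensorProduct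

section poly
open MvPolynomial
variable {R : Type} [CommRing R] {n : ℕ} {w : Fin n → ℤ}
  {M : Type} [AddCommGroup M] [Module (MvPolynomial (Fin n) R) M]

lemma hA_poly (a : MvPolynomial (Fin n) R) : ∃ r : R,
    a - algebraMap R (MvPolynomial (Fin n) R) r ∈
      Ideal.span (Set.range (fun j : Fin n => (X j : MvPolynomial (Fin n) R))) := by
  refine ⟨constantCoeff a, ?_⟩
  rw [← Ideal.Quotient.eq_zero_iff_mem, map_sub, sub_eq_zero]
  induction a using MvPolynomial.induction_on with
  | C r => simp [MvPolynomial.algebraMap_eq]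
  | add p q hp hq => rw [map_add, map_add, map_add, map_add, hp, hq]
  | mul_X p j _ =>
    have : (Ideal.Quotient.mk (Ideal.span (Set.range
        (fun j : Fin n => (X j : MvPolynomial (Fin n) R))))) (X j) = 0 :=
      Ideal.Quotient.eq_zero_iff_mem.2 (Ideal.subset_span ⟨j, rfl⟩)
    rw [map_mul, this]; simp

/-- a homogeneous scalar shifts components -/
lemma dec_smul (ℳ : ℤ → AddSubgroup M) [DirectSum.Decomposition ℳ]
    [SetLike.GradedSMul (weightedHomogeneousSubmodule R w) ℳ] (e : ℤ)
    (a : MvPolynomial (Fin n) R) (ha : a ∈ weightedHomogeneousSubmodule R w e) (μ : ℤ) (m : M) :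
    (DirectSum.decompose ℳ (a • m) (μ + e) : M) = a • (DirectSum.decompose ℳ m μ : M) := by
  induction m using DirectSum.Decomposition.inductionOn ℳ with
  | zero => simp
  | @homogeneous i m =>
    have h1 : a • (m : M) ∈ ℳ (e + i) := SetLike.GradedSMul.smul_mem ha m.2
    by_cases h : i = μ
    · subst h
      rw [DirectSum.decompose_of_mem_same ℳ (by rwa [add_comm] at h1),
        DirectSum.decompose_of_mem_same ℳ m.2]
    · rw [DirectSum.decompose_of_mem_ne ℳ h1 (by omega),
        DirectSum.decompose_of_mem_ne ℳ m.2 h, smul_zero]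
  | add m m' h h' =>
    rw [smul_add, DirectSum.decompose_add, DirectSum.decompose_add, DirectSum.add_apply,
      DirectSum.add_apply, AddMemClass.coe_add, AddMemClass.coe_add, h, h', smul_add]

/-- the grading of `M` -/
def grM (ℳ : ℤ → AddSubgroup M) [DirectSum.Decomposition ℳ]
    [SetLike.GradedSMul (weightedHomogeneousSubmodule R w) ℳ] :
    Gr R (fun j : Fin n => (X j : MvPolynomial (Fin n) R)) w M where
  pr μ := AddMonoidHom.mk' (fun m => (DirectSum.decompose ℳ m μ : M)) (fun m m' => by
    rw [DirectSum.decompose_add, DirectSum.add_apply, AddMemClass.coe_add])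
  lin μ r m := by
    have := dec_smul (w := w) ℳ 0 (algebraMap R (MvPolynomial (Fin n) R) r)
      (isWeightedHomogeneous_C w r) μ m
    rw [add_zero] at this
    exact this
  idem μ m := DirectSum.decompose_of_mem_same ℳ (DirectSum.decompose ℳ m μ).2
  shift μ j m := dec_smul (w := w) ℳ (w j) (X j) (isWeightedHomogeneous_X R w j) μ m
  tot m := by
    classical
    refine ⟨(DirectSum.decompose ℳ m).support, fun E' hE => ?_⟩
    conv_rhs => rw [← DirectSum.sum_support_decompose ℳ m]
    refine (Finset.sum_subset hE ?_).symm
    intro i _ hi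
    have : DirectSum.decompose ℳ m i = 0 := by simpa using hi
    change ((DirectSum.decompose ℳ m i : ℳ i) : M) = 0
    rw [this]; rfl

end poly

variable {R : Type} [CommRing R] {A : Type} [CommRing A] [Algebra R A] {n : ℕ} {x : Fin n → A}
  {w : Fin n → ℤ}
variable {M : Type} [AddCommGroup M] [Module R M] [Module A M] [IsScalarTower R A M]
variable {N : Type} [AddCommGroup N] [Module R N]

lemma cechTmul_eq (T : Finset (Fin n)) (c : cechL A x M T) (e : N) :
    cechTmul R A M N x T c e = fL x (tmulRightS R A M N e) T c := by
  obtain ⟨m, k, rfl⟩ := exists_mk x T c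
  rw [fL_mk, cechTmul, LocalizedModule.lift_mk, Module.End.algebraMap_isUnit_inv_apply_eq_iff,
    pw_coe, smul_pw_mk]
  rfl

end
end CB

open MvPolynomial in
/-- **Comparison of cohomology under base change (Lemma CompCoh).**
Let `R` be Noetherian, `S := R[X_1, …, X_n]` graded with `deg X_i = w i > 0`, `N` a
finitely generated `R`-module and `M` a finitely generated graded `S`-module.  Let
`d := max { i | H^i_{S₊}(M ⊗_R N) ≠ 0 }`.  Then the natural map
`H^d_{S₊}(M) ⊗_R N → H^d_{S₊}(M ⊗_R N)` (characterized on cocycles by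
`z ⊗ ν ↦ class of (T ↦ z_T ⊗ ν)`) is an isomorphism, and for every `i > d` and every
`q`, `Tor_q^R(H^i_{S₊}(M), N) = 0` and `H^i_{S₊}(Tor_q^R(M, N)) = 0`
(`Tor` computed from any resolution of `N` by finite free `R`-modules, and local
cohomology by the Čech complex on the variables). -/
theorem top_localCohomology_base_change
    (R : Type) [CommRing R] [IsNoetherianRing R]
    {n : ℕ} (w : Fin n → ℤ) (hw : ∀ i, 0 < w i)
    (M : Type) [AddCommGroup M]
    [Module (MvPolynomial (Fin n) R) M] [Module R M]
    [IsScalarTower R (MvPolynomial (Fin n) R) M]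
    [Module.Finite (MvPolynomial (Fin n) R) M]
    (ℳ : ℤ → AddSubgroup M) [DirectSum.Decomposition ℳ]
    [SetLike.GradedSMul (weightedHomogeneousSubmodule R w) ℳ]
    (N : Type) [AddCommGroup N] [Module R N] [Module.Finite R N]
    (F : ℕ → Type) [∀ q, AddCommGroup (F q)] [∀ q, Module R (F q)]
    [∀ q, Module.Free R (F q)] [∀ q, Module.Finite R (F q)]
    (dF : ∀ q : ℕ, F (q + 1) →ₗ[R] F q) (ε : F 0 →ₗ[R] N)
    (hexact : ∀ q : ℕ, Function.Exact (dF (q + 1)) (dF q))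
    (hexact0 : Function.Exact (dF 0) ε) (hsurj : Function.Surjective ε)
    (d : ℕ)
    (hd : Nontrivial (lcMod (MvPolynomial (Fin n) R)
        (fun j : Fin n => (X j : MvPolynomial (Fin n) R)) (TensorProduct R M N) d) ∧
      ∀ i : ℕ, d < i → Subsingleton (lcMod (MvPolynomial (Fin n) R)
        (fun j : Fin n => (X j : MvPolynomial (Fin n) R)) (TensorProduct R M N) i)) :
    (∃ g : TensorProduct R
        (RestrictScalars R (MvPolynomial (Fin n) R)
          (lcMod (MvPolynomial (Fin n) R) (fun j : Fin n => (X j : MvPolynomial (Fin n) R)) M d))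
        N →ₗ[R]
      RestrictScalars R (MvPolynomial (Fin n) R)
        (lcMod (MvPolynomial (Fin n) R) (fun j : Fin n => (X j : MvPolynomial (Fin n) R))
          (TensorProduct R M N) d),
      (∀ (z : ↥(LinearMap.ker (cechD (MvPolynomial (Fin n) R)
            (fun j : Fin n => (X j : MvPolynomial (Fin n) R)) M d))) (c : N),
        ∃ zz : ↥(LinearMap.ker (cechD (MvPolynomial (Fin n) R)
            (fun j : Fin n => (X j : MvPolynomial (Fin n) R)) (TensorProduct R M N) d)),
          (∀ T, (zz : cechC (MvPolynomial (Fin n) R)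
              (fun j : Fin n => (X j : MvPolynomial (Fin n) R)) (TensorProduct R M N) d) T =
            cechTmul R (MvPolynomial (Fin n) R) M N
              (fun j : Fin n => (X j : MvPolynomial (Fin n) R)) T.1
              ((z : cechC (MvPolynomial (Fin n) R)
                (fun j : Fin n => (X j : MvPolynomial (Fin n) R)) M d) T) c) ∧
          g ((Submodule.Quotient.mk z :
              lcMod (MvPolynomial (Fin n) R)
                (fun j : Fin n => (X j : MvPolynomial (Fin n) R)) M d) ⊗ₜ[R] c) =
            (Submodule.Quotient.mk zz :
              lcMod (MvPolynomial (Fin n) R)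
                (fun j : Fin n => (X j : MvPolynomial (Fin n) R)) (TensorProduct R M N) d)) ∧
      Function.Bijective g) ∧
    (∀ i : ℕ, d < i → ∀ q : ℕ,
      Subsingleton (torModS R (MvPolynomial (Fin n) R)
        (lcMod (MvPolynomial (Fin n) R)
          (fun j : Fin n => (X j : MvPolynomial (Fin n) R)) M i) F dF q) ∧
      lcVanish (MvPolynomial (Fin n) R) (fun j : Fin n => (X j : MvPolynomial (Fin n) R))
        (torMod R (MvPolynomial (Fin n) R) M F dF q) i) := by
  have hv : ∀ j, d < j → CB.van (fun j : Fin n => (X j : MvPolynomial (Fin n) R))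
      (TensorProduct R M N) j := fun j hj h => (hd.2 j hj).elim h 0
  have hsup := CB.support_tensor (R := R) (M := M) (N := N) d hv
  have hgood : ∀ j, d < j → ∀ (L : Type) [AddCommGroup L] [Module (MvPolynomial (Fin n) R) L]
      [Module.Finite (MvPolynomial (Fin n) R) L],
      CB.Kil (Module.annihilator (MvPolynomial (Fin n) R) M) L →
      CB.Gr R (fun j : Fin n => (X j : MvPolynomial (Fin n) R)) w L →
      CB.GoodM (Module.annihilator R N) (MvPolynomial (Fin n) R)
        (lcMod (MvPolynomial (Fin n) R) (fun j : Fin n => (X j : MvPolynomial (Fin n) R)) L j) :=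
    fun j hj L _ _ _ hL g => CB.good_thm CB.hA_poly hw _ _ d hsup j hj L hL g
  refine ⟨⟨CB.gam (fun j : Fin n => (X j : MvPolynomial (Fin n) R)) M N d, ?_, ?_⟩, ?_⟩
  · intro z c
    refine ⟨CB.fZ _ (tmulRightS R (MvPolynomial (Fin n) R) M N c) d z, ?_, rfl⟩
    intro T
    rw [CB.cechTmul_eq]
    rfl
  · exact CB.gam_top (CB.grM (w := w) ℳ) d (hgood (d + 1) (Nat.lt_succ_self d)) hexact0 hsurj
      (CB.htpy0 hexact0)
  · intro i hi q
    constructor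
    · letI : Module R (lcMod (MvPolynomial (Fin n) R)
          (fun j : Fin n => (X j : MvPolynomial (Fin n) R)) M i) :=
        Module.compHom _ (algebraMap R (MvPolynomial (Fin n) R))
      haveI : IsScalarTower R (MvPolynomial (Fin n) R) (lcMod (MvPolynomial (Fin n) R)
          (fun j : Fin n => (X j : MvPolynomial (Fin n) R)) M i) :=
        ⟨fun r s m => by rw [Algebra.smul_def, mul_smul]; rfl⟩
      have hz : ∀ y : torMod R (MvPolynomial (Fin n) R) (lcMod (MvPolynomial (Fin n) R)
          (fun j : Fin n => (X j : MvPolynomial (Fin n) R)) M i) F dF q, y = 0 := by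
        intro y
        refine CB.good_zero (CB.tor_good (hgood i hi M ?_ (CB.grM (w := w) ℳ)) q) y ?_
        · exact fun a ha m => Module.mem_annihilator.1 ha m
        · exact fun a ha => CB.tor_kill hexact hexact0 a ha q y
      exact ⟨fun y z => (hz y).trans (hz z).symm⟩
    · rw [CB.lcVanish_iff]
      haveI := CB.tor_finite (R := R) (A := MvPolynomial (Fin n) R) (M := M) (dF := dF) q
      exact hsup i hi _ (CB.tor_kil q) (fun a ha y => CB.tor_kill hexact hexact0 a ha q y)
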